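/- Let x > 0 and let φ ∈ (0, π/2] satisfy cos φ − (π/2 − φ)·sin φ > 0 and sin φ / (cos φ − (π/2 − φ)·sin φ) = x/π, and set ι = x / sin φ. Then for every ε > 0 there exists k₀ ∈ ℕ such that for every integer k ≥ k₀ and every real number j which is the k-th positive zero of J_{x·k}, one has −exp((1/3 + ε)·x) · π/(4k) ≤ j/k − ι ≤ −(1 − ε) · π/(4k). -/

import Mathlib

open Real Set

/-- The Bessel function of the first kind of order `ν`. -/
noncomputable def besselJ (ν x : ℝ) : ℝ :=
  ∑' m : ℕ, (-1 : ℝ) ^ m / (m.factorial * Real.Gamma (m + ν + 1)) * (x / 2) ^ (2 * (m : ℝ) + ν)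

/-- `j` is the `k`-th positive zero of the Bessel function `J_ν`. -/
def IsKthBesselZero (ν : ℝ) (k : ℕ) (j : ℝ) : Prop :=
  0 < j ∧ besselJ ν j = 0 ∧
    {t : ℝ | t ∈ Set.Ioo 0 j ∧ besselJ ν t = 0}.encard = (k - 1 : ℕ)

open Filter Topology

noncomputable def bc (ν : ℝ) (m : ℕ) : ℝ := (-1 : ℝ) ^ m / (m.factorial * Real.Gamma (m + ν + 1))

noncomputable def bg (ν y : ℝ) : ℝ := ∑' m : ℕ, bc ν m * y ^ m

lemma gam_pos {ν : ℝ} (hν : 0 ≤ ν) (m : ℕ) : 0 < Real.Gamma (m + ν + 1) :=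
  Real.Gamma_pos_of_pos (by positivity)

lemma gam_succ {ν : ℝ} (hν : 0 ≤ ν) (m : ℕ) :
    Real.Gamma ((m + 1 : ℕ) + ν + 1) = (m + ν + 1) * Real.Gamma (m + ν + 1) := by
  rw [← Real.Gamma_add_one (by positivity)]; congr 1; push_cast; ring

lemma gam_ge {ν : ℝ} (hν : 0 ≤ ν) (m : ℕ) : Real.Gamma (ν + 1) ≤ Real.Gamma (m + ν + 1) := by
  induction m with
  | zero => simp
  | succ m ih =>
    rw [gam_succ hν]
    have := gam_pos hν m
    have h2 : (0:ℝ) ≤ m := by positivity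
    nlinarith

lemma bc_abs {ν : ℝ} (hν : 0 ≤ ν) (m : ℕ) :
    |bc ν m| ≤ (1 / Real.Gamma (ν + 1)) * (1 / m.factorial) := by
  unfold bc
  have h1 := gam_pos hν m
  have h0 : 0 < Real.Gamma (ν + 1) := Real.Gamma_pos_of_pos (by positivity)
  have hf : (0:ℝ) < m.factorial := by positivity
  rw [abs_div, abs_pow, abs_neg, abs_one, one_pow, abs_of_pos (by positivity), ← one_div_mul_one_div,
    mul_comm]
  gcongr
  exact gam_ge hν m

lemma bc_succ {ν : ℝ} (m : ℕ) : bc ν (m + 1) * (m + 1) = - bc (ν + 1) m := by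
  unfold bc
  have e : ((m + 1 : ℕ) : ℝ) + ν + 1 = m + (ν + 1) + 1 := by push_cast; ring
  rw [e, Nat.factorial_succ, pow_succ]
  push_cast
  have hf : (m.factorial : ℝ) ≠ 0 := by positivity
  have hm : (m : ℝ) + 1 ≠ 0 := by positivity
  by_cases hG : Real.Gamma (m + (ν + 1) + 1) = 0
  · simp [hG]
  · field_simp

lemma bg_summable {ν : ℝ} (hν : 0 ≤ ν) (y : ℝ) : Summable (fun m : ℕ => bc ν m * y ^ m) := by
  have hs := (Real.summable_pow_div_factorial |y|).mul_left (1 / Real.Gamma (ν + 1))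
  refine Summable.of_norm_bounded hs (fun m => ?_)
  rw [Real.norm_eq_abs, abs_mul, abs_pow]
  calc |bc ν m| * |y| ^ m ≤ ((1 / Real.Gamma (ν + 1)) * (1 / m.factorial)) * |y| ^ m := by
        gcongr; exact bc_abs hν m
    _ = _ := by ring

lemma bg_hasDerivAt {ν : ℝ} (hν : 0 ≤ ν) (y : ℝ) : HasDerivAt (bg ν) (-bg (ν + 1) y) y := by
  have hR : |y| < |y| + 1 := by linarith
  set R := |y| + 1
  have hR0 : 0 ≤ R := by positivity
  have hs : Summable (fun m : ℕ => (1 / Real.Gamma (ν + 1)) * (m * R ^ (m - 1) / m.factorial)) := by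
    apply Summable.mul_left
    rw [← summable_nat_add_iff 1]
    refine (Real.summable_pow_div_factorial R).congr (fun m => ?_)
    rw [Nat.factorial_succ]
    push_cast
    have hf : (m.factorial : ℝ) ≠ 0 := by positivity
    have hm : (m : ℝ) + 1 ≠ 0 := by positivity
    field_simp
  have key := hasDerivAt_tsum_of_isPreconnected (𝕜 := ℝ) (t := Metric.ball (0:ℝ) R)
    (g := fun m y => bc ν m * y ^ m) (g' := fun m y => bc ν m * (m * y ^ (m - 1))) (y₀ := y) (y := y) hs
    Metric.isOpen_ball (convex_ball _ _).isPreconnected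
    (fun n z _ => by simpa using (hasDerivAt_pow n z).const_mul (bc ν n))
    (fun n z hz => by
      rw [Metric.mem_ball, dist_zero_right, Real.norm_eq_abs] at hz
      rw [Real.norm_eq_abs, abs_mul, abs_mul, abs_pow, Nat.abs_cast]
      calc |bc ν n| * (n * |z| ^ (n - 1)) ≤
            ((1 / Real.Gamma (ν + 1)) * (1 / n.factorial)) * (n * R ^ (n - 1)) := by
            gcongr; exact bc_abs hν n
        _ = _ := by ring)
    (by simpa using hR) (bg_summable hν y) (by simpa using hR)
  refine key.congr_deriv ?_
  have hs2 : Summable (fun m : ℕ => bc ν m * (m * y ^ (m - 1))) := by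
    rw [← summable_nat_add_iff 1]
    refine (bg_summable (ν := ν + 1) (by linarith) y).neg.congr (fun m => ?_)
    have := bc_succ (ν := ν) m
    push_cast
    rw [← mul_assoc, this]; ring
  rw [hs2.tsum_eq_zero_add]
  unfold bg
  rw [← tsum_neg]
  simp only [Nat.cast_zero, zero_mul, mul_zero, zero_add]
  refine tsum_congr (fun m => ?_)
  have := bc_succ (ν := ν) m
  push_cast
  rw [← mul_assoc, this]; ring

lemma bg_rec {ν : ℝ} (hν : 0 ≤ ν) (y : ℝ) :
    y * bg (ν + 1 + 1) y - (ν + 1) * bg (ν + 1) y + bg ν y = 0 := by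
  have s0 := bg_summable hν y
  have s1 := bg_summable (ν := ν + 1) (by linarith) y
  have s2 := bg_summable (ν := ν + 1 + 1) (by linarith) y
  unfold bg
  rw [s0.tsum_eq_zero_add, s1.tsum_eq_zero_add, mul_add, ← tsum_mul_left, ← tsum_mul_left]
  have s0' := (summable_nat_add_iff 1).2 s0
  have s1' := ((summable_nat_add_iff 1).2 s1).mul_left (ν + 1)
  have s2' := s2.mul_left y
  have hz : bc ν 0 = (ν + 1) * bc (ν + 1) 0 := by
    unfold bc
    have := gam_succ hν 0
    have hp := gam_pos hν 0
    simp only [Nat.cast_zero, zero_add, Nat.cast_one] at *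
    have e : ν + 1 + 1 = 1 + ν + 1 := by ring
    rw [e, this]
    have : ν + 1 ≠ 0 := by positivity
    field_simp
  have hm : ∀ m : ℕ, y * (bc (ν + 1 + 1) m * y ^ m) - (ν + 1) * (bc (ν + 1) (m + 1) * y ^ (m + 1))
      + bc ν (m + 1) * y ^ (m + 1) = 0 := by
    intro m
    have h1 := bc_succ (ν := ν + 1) m
    have h2 : bc ν (m + 1) = (m + 1 + ν + 1) * bc (ν + 1) (m + 1) := by
      unfold bc
      have := gam_succ hν (m + 1)
      have hp := gam_pos hν (m + 1)
      have e : ((m + 1 : ℕ) : ℝ) + (ν + 1) + 1 = (m + 1 + 1 : ℕ) + ν + 1 := by push_cast; ring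
      rw [e, this]
      have : ((m + 1 : ℕ) : ℝ) + ν + 1 ≠ 0 := by positivity
      have hf : ((m + 1).factorial : ℝ) ≠ 0 := by positivity
      push_cast at *
      field_simp
    have h3 : bc (ν + 1 + 1) m = - (bc (ν + 1) (m + 1) * (m + 1)) := by linarith
    rw [h3, h2]; ring
  have hsum := (((s2'.hasSum).sub s1'.hasSum).add s0'.hasSum)
  have hz' := hsum.unique (by simpa only [hm] using (hasSum_zero : HasSum (fun _ : ℕ => (0:ℝ)) 0))
  simp only [pow_zero, mul_one] 
  linarith

lemma bessel_eq {ν x : ℝ} (hx : 0 < x) : besselJ ν x = (x / 2) ^ ν * bg ν (x ^ 2 / 4) := by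
  unfold besselJ bg
  rw [← tsum_mul_left]
  refine tsum_congr (fun m => ?_)
  rw [Real.rpow_add (by positivity)]
  have : (x / 2) ^ (2 * (m : ℝ)) = (x ^ 2 / 4) ^ m := by
    rw [Real.rpow_mul (by positivity)]
    norm_num
    congr 1; ring
  rw [this]; unfold bc; ring

noncomputable def bU (ν x : ℝ) : ℝ := √x * besselJ ν x

lemma bessel_hasDerivAt {ν x : ℝ} (hν : 0 ≤ ν) (hx : 0 < x) :
    HasDerivAt (besselJ ν) (ν / x * besselJ ν x - besselJ (ν + 1) x) x := by
  have h1 : HasDerivAt (fun x : ℝ => (x / 2) ^ ν * bg ν (x ^ 2 / 4))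
      ((1 / 2 * ν * (x / 2) ^ (ν - 1)) * bg ν (x ^ 2 / 4)
        + (x / 2) ^ ν * (-bg (ν + 1) (x ^ 2 / 4) * (2 * x / 4))) x := by
    apply HasDerivAt.mul
    · exact ((hasDerivAt_id x).div_const 2).rpow_const (Or.inl (by simp; positivity))
    · exact HasDerivAt.comp (h₂ := bg ν) x (bg_hasDerivAt hν (x ^ 2 / 4)) (by simpa using (hasDerivAt_pow 2 x).div_const 4)
  have h2 := h1.congr_of_eventuallyEq (f₁ := besselJ ν)
    (by filter_upwards [lt_mem_nhds hx] with y hy using bessel_eq hy)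
  refine h2.congr_deriv ?_
  rw [bessel_eq hx, bessel_eq hx, Real.rpow_sub_one (by positivity), Real.rpow_add_one (by positivity)]
  field_simp
  ring

lemma bessel_rec {ν x : ℝ} (hν : 0 ≤ ν) (hx : 0 < x) :
    besselJ (ν + 1 + 1) x = 2 * (ν + 1) / x * besselJ (ν + 1) x - besselJ ν x := by
  rw [bessel_eq hx, bessel_eq hx, bessel_eq hx, Real.rpow_add_one (by positivity), Real.rpow_add_one (by positivity)]
  have := bg_rec hν (x ^ 2 / 4)
  have h2 : (x/2)^ν * (x ^ 2 / 4 * bg (ν + 1 + 1) (x ^ 2 / 4) - (ν + 1) * bg (ν + 1) (x ^ 2 / 4) + bg ν (x ^ 2 / 4)) = 0 := by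
    rw [this]; ring
  field_simp
  linear_combination 4 * this

lemma bU_hasDerivAt {ν x : ℝ} (hν : 0 ≤ ν) (hx : 0 < x) :
    HasDerivAt (bU ν) ((ν + 1 / 2) / x * bU ν x - bU (ν + 1) x) x := by
  have h := (Real.hasDerivAt_sqrt hx.ne').mul (bessel_hasDerivAt hν hx)
  refine h.congr_deriv ?_
  unfold bU
  have hs : √x ≠ 0 := by positivity
  have hq : √x * √x = x := Real.mul_self_sqrt hx.le
  generalize √x = s at *
  subst hq
  field_simp
  ring

lemma bU1_hasDerivAt {ν x : ℝ} (hν : 0 ≤ ν) (hx : 0 < x) :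
    HasDerivAt (bU (ν + 1)) (bU ν x - (ν + 1 / 2) / x * bU (ν + 1) x) x := by
  refine (bU_hasDerivAt (ν := ν + 1) (by linarith) hx).congr_deriv ?_
  unfold bU
  rw [bessel_rec hν hx]
  field_simp
  ring

lemma bg_cont {ν : ℝ} (hν : 0 ≤ ν) : Continuous (bg ν) :=
  continuous_iff_continuousAt.2 (fun y => (bg_hasDerivAt hν y).continuousAt)

lemma bg_zero_pos {ν : ℝ} (hν : 0 ≤ ν) : 0 < bg ν 0 := by
  unfold bg
  rw [tsum_eq_single 0 (by intro m hm; simp [hm])]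
  have := gam_pos hν 0
  simp [bc] at *
  exact this

lemma bU_pos {ν : ℝ} (hν : 0 ≤ ν) : ∀ᶠ x in 𝓝[>] (0:ℝ), 0 < bU ν x := by
  have hc : ContinuousAt (fun x : ℝ => bg ν (x ^ 2 / 4)) 0 :=
    ((bg_cont hν).comp (by fun_prop)).continuousAt
  have : ∀ᶠ x in 𝓝 (0:ℝ), 0 < bg ν (x ^ 2 / 4) := by
    apply hc.eventually (lt_mem_nhds (b := (fun x : ℝ => bg ν (x ^ 2 / 4)) 0) ?_)
    simpa using bg_zero_pos hν
  filter_upwards [nhdsWithin_le_nhds this, self_mem_nhdsWithin] with x hx hx0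
  have hx0 : 0 < x := hx0
  unfold bU
  rw [bessel_eq hx0]
  positivity

lemma bessel_tendsto {ν : ℝ} (hν : 0 < ν) : Tendsto (besselJ ν) (𝓝[>] 0) (𝓝 0) := by
  have hc : Continuous (fun x : ℝ => (x / 2) ^ ν * bg ν (x ^ 2 / 4)) := by
    apply Continuous.mul
    · exact Continuous.rpow_const (by fun_prop) (fun x => Or.inr hν.le)
    · exact (bg_cont hν.le).comp (by fun_prop)
  have := (hc.tendsto 0).mono_left (nhdsWithin_le_nhds (s := Ioi 0))
  simp only [zero_div, Real.zero_rpow hν.ne', zero_mul] at this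
  refine this.congr' ?_
  filter_upwards [self_mem_nhdsWithin] with x hx using (bessel_eq hx).symm

lemma bU_tendsto {ν : ℝ} (hν : 0 < ν) : Tendsto (bU ν) (𝓝[>] 0) (𝓝 0) := by
  have h1 : Tendsto (fun x : ℝ => √x) (𝓝[>] 0) (𝓝 0) := by
    have := (Real.continuous_sqrt.tendsto 0).mono_left (nhdsWithin_le_nhds (s := Ioi (0:ℝ)))
    simpa using this
  have h2 := h1.mul (bessel_tendsto hν)
  rw [mul_zero] at h2
  exact h2

lemma bU_zero_iff {ν x : ℝ} (hx : 0 < x) : besselJ ν x = 0 ↔ bU ν x = 0 := by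
  unfold bU
  have hs : √x ≠ 0 := by positivity
  simp [hs]

noncomputable def bD (ν x : ℝ) : ℝ := (ν + 1 / 2) / x * bU ν x - bU (ν + 1) x

lemma bU_d {ν x : ℝ} (hν : 0 ≤ ν) (hx : 0 < x) : HasDerivAt (bU ν) (bD ν x) x :=
  bU_hasDerivAt hν hx

noncomputable def bq (ν x : ℝ) : ℝ := 1 - (ν ^ 2 - 1 / 4) / x ^ 2

lemma bD_d {ν x : ℝ} (hν : 0 ≤ ν) (hx : 0 < x) : HasDerivAt (bD ν) (-(bq ν x) * bU ν x) x := by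
  have h1 : HasDerivAt (fun x : ℝ => (ν + 1 / 2) / x) (-(ν + 1 / 2) / x ^ 2) x := by
    exact ((hasDerivAt_const x (ν + 1 / 2)).div (hasDerivAt_id x) hx.ne').congr_deriv (by simp)
  have h := (h1.mul (bU_hasDerivAt hν hx)).sub (bU1_hasDerivAt hν hx)
  refine h.congr_deriv ?_
  unfold bq
  field_simp
  ring

lemma mono_of_deriv {f f' : ℝ → ℝ} {s : Set ℝ} (hs : Convex ℝ s) (hf : ∀ x ∈ s, HasDerivAt f (f' x) x)
    (h : ∀ x ∈ s, 0 ≤ f' x) : MonotoneOn f s :=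
  monotoneOn_of_hasDerivWithinAt_nonneg hs (fun x hx => (hf x hx).continuousAt.continuousWithinAt)
    (fun x hx => (hf x (interior_subset hx)).hasDerivWithinAt) (fun x hx => h x (interior_subset hx))

lemma anti_of_deriv {f f' : ℝ → ℝ} {s : Set ℝ} (hs : Convex ℝ s) (hf : ∀ x ∈ s, HasDerivAt f (f' x) x)
    (h : ∀ x ∈ s, f' x ≤ 0) : AntitoneOn f s :=
  antitoneOn_of_hasDerivWithinAt_nonpos hs (fun x hx => (hf x hx).continuousAt.continuousWithinAt)
    (fun x hx => (hf x (interior_subset hx)).hasDerivWithinAt) (fun x hx => h x (interior_subset hx))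

lemma smono_of_deriv {f f' : ℝ → ℝ} {s : Set ℝ} (hs : Convex ℝ s) (hf : ∀ x ∈ s, HasDerivAt f (f' x) x)
    (h : ∀ x ∈ s, 0 < f' x) : StrictMonoOn f s :=
  strictMonoOn_of_hasDerivWithinAt_pos hs (fun x hx => (hf x hx).continuousAt.continuousWithinAt)
    (fun x hx => (hf x (interior_subset hx)).hasDerivWithinAt) (fun x hx => h x (interior_subset hx))

noncomputable def bE (ν x : ℝ) : ℝ := bD ν x ^ 2 + bU ν x ^ 2

lemma bE_d {ν x : ℝ} (hν : 0 ≤ ν) (hx : 0 < x) :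
    HasDerivAt (bE ν) (2 * ((ν ^ 2 - 1 / 4) / x ^ 2) * (bD ν x * bU ν x)) x := by
  have h := ((bD_d hν hx).pow 2).add ((bU_d hν hx).pow 2)
  refine h.congr_deriv ?_
  unfold bq; simp; ring

lemma exp_d (c : ℝ) {x : ℝ} (hx : 0 < x) :
    HasDerivAt (fun x : ℝ => Real.exp (-c / x)) (Real.exp (-c / x) * (c / x ^ 2)) x := by
  have h1 : HasDerivAt (fun x : ℝ => (-c) / x) (c / x ^ 2) x := by
    exact ((hasDerivAt_const x (-c)).div (hasDerivAt_id x) hx.ne').congr_deriv (by simp)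
  exact h1.exp

lemma bE_mono {ν : ℝ} (hν : 1 / 2 ≤ ν) :
    MonotoneOn (fun x => bE ν x * Real.exp (-(ν ^ 2 - 1 / 4) / x)) (Ioi 0) := by
  have hc : 0 ≤ ν ^ 2 - 1 / 4 := by nlinarith
  refine mono_of_deriv (convex_Ioi 0)
    (fun x hx => (bE_d (by linarith) hx).mul (exp_d (ν ^ 2 - 1 / 4) hx)) (fun x hx => ?_)
  have hx : 0 < x := hx
  have : 0 ≤ (ν ^ 2 - 1 / 4) / x ^ 2 * (bD ν x + bU ν x) ^ 2 * Real.exp (-(ν ^ 2 - 1 / 4) / x) := by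
    positivity
  unfold bE
  linarith

lemma bE_anti {ν : ℝ} (hν : 1 / 2 ≤ ν) :
    AntitoneOn (fun x => bE ν x * Real.exp ((ν ^ 2 - 1 / 4) / x)) (Ioi 0) := by
  have hc : 0 ≤ ν ^ 2 - 1 / 4 := by nlinarith
  have e : ∀ x, Real.exp ((ν ^ 2 - 1 / 4) / x) = Real.exp (-(-(ν ^ 2 - 1 / 4)) / x) := by
    intro x; rw [neg_neg]
  simp_rw [e]
  refine anti_of_deriv (convex_Ioi 0)
    (fun x hx => (bE_d (by linarith) hx).mul (exp_d (-(ν ^ 2 - 1 / 4)) hx)) (fun x hx => ?_)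
  have hx : 0 < x := hx
  have : 0 ≤ (ν ^ 2 - 1 / 4) / x ^ 2 * (bD ν x - bU ν x) ^ 2 * Real.exp (-(-(ν ^ 2 - 1 / 4)) / x) := by
    positivity
  unfold bE
  refine le_trans (le_of_eq ?_) (neg_nonpos.2 this)
  ring

lemma bE_pos {ν x : ℝ} (hν : 1 / 2 ≤ ν) (hx : 0 < x) : 0 < bE ν x := by
  obtain ⟨y, hy, hy1⟩ := ((bU_pos (ν := ν) (by linarith)).and (Ioo_mem_nhdsGT hx)).exists
  have h := bE_mono hν (show y ∈ Ioi (0:ℝ) from hy1.1) (show x ∈ Ioi (0:ℝ) from hx) hy1.2.le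
  have h1 : 0 < bE ν y := by unfold bE; positivity
  have h2 : 0 < bE ν y * Real.exp (-(ν ^ 2 - 1 / 4) / y) := by positivity
  exact pos_of_mul_pos_left (lt_of_lt_of_le h2 h) (Real.exp_pos _).le

lemma bD_ne {ν x : ℝ} (hν : 1 / 2 ≤ ν) (hx : 0 < x) (h0 : bU ν x = 0) : bD ν x ≠ 0 := by
  intro h
  have := bE_pos hν hx
  simp [bE, h, h0] at this

lemma zeros_finite {ν : ℝ} (hν : 1 / 2 ≤ ν) (X : ℝ) : {t : ℝ | t ∈ Ioo 0 X ∧ bU ν t = 0}.Finite := by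
  by_contra hinf
  obtain ⟨δ, hδ, hδ2⟩ := (mem_nhdsGT_iff_exists_Ioo_subset).1 (bU_pos (ν := ν) (by linarith))
  have hδ : 0 < δ := hδ
  have hsub : {t : ℝ | t ∈ Ioo 0 X ∧ bU ν t = 0} ⊆ Icc δ X := by
    rintro t ⟨ht, h0⟩
    refine ⟨?_, ht.2.le⟩
    by_contra hlt
    have := hδ2 ⟨ht.1, not_le.1 hlt⟩
    simp [h0] at this
  obtain ⟨c, hc, hacc⟩ := Set.Infinite.exists_accPt_of_subset_isCompact hinf isCompact_Icc hsub
  have hc0 : 0 < c := lt_of_lt_of_le hδ hc.1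
  have hfr := accPt_iff_frequently_nhdsNE.1 hacc
  have hd := bU_d (ν := ν) (by linarith) hc0
  have hz : bU ν c = 0 := by
    by_contra hne
    have h1 := hd.continuousAt.eventually_ne hne
    obtain ⟨y, hy, hy2⟩ := (hfr.and_eventually (h1.filter_mono nhdsWithin_le_nhds)).exists
    exact hy2 hy.2
  have h1 := hd.eventually_ne (c := 0) (bD_ne hν hc0 hz)
  obtain ⟨y, hy, hy2⟩ := (hfr.and_eventually h1).exists
  exact hy2 hy.2

lemma sturm_core {a b A B : ℝ} {w w' : ℝ → ℝ} (hab : a < b)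
    (hd : ∀ x ∈ Ioo a b, HasDerivAt w (w' x) x) (hp : ∀ x ∈ Ioo a b, 0 < w' x)
    (hA : Tendsto w (𝓝[>] a) (𝓝 A)) (hB : Tendsto w (𝓝[<] b) (𝓝 B)) : A < B := by
  have hm := smono_of_deriv (convex_Ioo a b) hd hp
  obtain ⟨x, hx⟩ := exists_between hab
  obtain ⟨y, hy⟩ := exists_between hx.2
  have hy' : y ∈ Ioo a b := ⟨hx.1.trans hy.1, hy.2⟩
  have h1 : A ≤ w x := by
    refine le_of_tendsto hA ?_
    filter_upwards [Ioo_mem_nhdsGT hx.1] with z hz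
    exact (hm ⟨hz.1, hz.2.trans hx.2⟩ hx hz.2).le
  have h2 : w y ≤ B := by
    refine ge_of_tendsto hB ?_
    filter_upwards [Ioo_mem_nhdsLT hy.2] with z hz
    exact (hm hy' ⟨hy'.1.trans hz.1, hz.2⟩ hz.1).le
  linarith [hm hx hy' hy.1]

lemma sturm_pos {a b A B : ℝ} {u u' v v' q Q : ℝ → ℝ} (hab : a < b)
    (hu : ∀ x ∈ Ioo a b, HasDerivAt u (u' x) x) (hu' : ∀ x ∈ Ioo a b, HasDerivAt u' (-(q x) * u x) x)
    (hv : ∀ x ∈ Ioo a b, HasDerivAt v (v' x) x) (hv' : ∀ x ∈ Ioo a b, HasDerivAt v' (-(Q x) * v x) x)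
    (hq : ∀ x ∈ Ioo a b, q x < Q x)
    (hup : ∀ x ∈ Ioo a b, 0 < u x) (hvp : ∀ x ∈ Ioo a b, 0 < v x)
    (hA : Tendsto (fun x => u' x * v x - u x * v' x) (𝓝[>] a) (𝓝 A))
    (hB : Tendsto (fun x => u' x * v x - u x * v' x) (𝓝[<] b) (𝓝 B)) (hA0 : 0 ≤ A) (hB0 : B ≤ 0) : False := by
  have := sturm_core hab (w' := fun x => (Q x - q x) * (u x * v x)) (fun x hx => by
    refine (((hu' x hx).mul (hv x hx)).sub ((hu x hx).mul (hv' x hx))).congr_deriv ?_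
    ring) (fun x hx => mul_pos (sub_pos.2 (hq x hx)) (mul_pos (hup x hx) (hvp x hx))) hA hB
  linarith

lemma sign_const {a b : ℝ} {u : ℝ → ℝ} (hu : ContinuousOn u (Ioo a b)) (h : ∀ x ∈ Ioo a b, u x ≠ 0) :
    ∃ σ : ℝ, (σ ≠ 0) ∧ ∀ x ∈ Ioo a b, 0 < σ * u x := by
  by_cases hp : ∀ x ∈ Ioo a b, 0 < u x
  · exact ⟨1, one_ne_zero, by simpa using hp⟩
  · push Not at hp
    obtain ⟨y, hy, hy0⟩ := hp
    refine ⟨-1, by norm_num, fun x hx => ?_⟩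
    by_contra hx0
    have hx0 : 0 ≤ u x := by linarith
    obtain ⟨z, hz, hz0⟩ := isPreconnected_Ioo.intermediate_value hy hx hu ⟨hy0, hx0⟩
    exact h z hz hz0

lemma deriv_right {a b d : ℝ} {u : ℝ → ℝ} (hab : a < b) (hd : HasDerivAt u d a) (h0 : u a = 0)
    (hp : ∀ x ∈ Ioo a b, 0 < u x) : 0 ≤ d := by
  have h := (hasDerivAt_iff_tendsto_slope.1 hd).mono_left (nhdsGT_le_nhdsNE a)
  refine ge_of_tendsto h ?_
  filter_upwards [Ioo_mem_nhdsGT hab] with x hx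
  rw [slope_def_field, h0, sub_zero]
  exact (div_pos (hp x hx) (sub_pos.2 hx.1)).le

lemma deriv_left {a b d : ℝ} {u : ℝ → ℝ} (hab : a < b) (hd : HasDerivAt u d b) (h0 : u b = 0)
    (hp : ∀ x ∈ Ioo a b, 0 < u x) : d ≤ 0 := by
  have h := (hasDerivAt_iff_tendsto_slope.1 hd).mono_left (nhdsLT_le_nhdsNE b)
  refine le_of_tendsto h ?_
  filter_upwards [Ioo_mem_nhdsLT hab] with x hx
  rw [slope_def_field, h0, sub_zero]
  exact (div_neg_of_pos_of_neg (hp x hx) (sub_neg.2 hx.2)).le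

/-- Sturm comparison with a general left endpoint condition. -/
lemma sturm_gen {a b : ℝ} {u u' v v' q Q : ℝ → ℝ} (hab : a < b)
    (hu : ∀ x ∈ Ioc a b, HasDerivAt u (u' x) x) (hu' : ∀ x ∈ Ioc a b, HasDerivAt u' (-(q x) * u x) x)
    (hv : ∀ x ∈ Ioc a b, HasDerivAt v (v' x) x) (hv' : ∀ x ∈ Ioc a b, HasDerivAt v' (-(Q x) * v x) x)
    (hq : ∀ x ∈ Ioo a b, q x < Q x)
    (hun : ∀ x ∈ Ioo a b, u x ≠ 0) (hub : u b = 0)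
    (hA : Tendsto (fun x => u' x * v x - u x * v' x) (𝓝[>] a) (𝓝 0) ∨
      (u a = 0 ∧ HasDerivAt u (u' a) a ∧ HasDerivAt u' (-(q a) * u a) a ∧ HasDerivAt v (v' a) a ∧
        HasDerivAt v' (-(Q a) * v a) a)) :
    ∃ x ∈ Ioo a b, v x = 0 := by
  by_contra hvn
  push Not at hvn
  have hb : b ∈ Ioc a b := ⟨hab, le_rfl⟩
  obtain ⟨σ, hσ, hup⟩ := sign_const (fun x hx => (hu x (Ioo_subset_Ioc_self hx)).continuousAt.continuousWithinAt) hun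
  obtain ⟨τ, hτ, hvp⟩ := sign_const (fun x hx => (hv x (Ioo_subset_Ioc_self hx)).continuousAt.continuousWithinAt) hvn
  have hB : Tendsto (fun x => σ * u' x * (τ * v x) - σ * u x * (τ * v' x)) (𝓝[<] b)
      (𝓝 (σ * u' b * (τ * v b) - σ * u b * (τ * v' b))) := by
    have : ContinuousAt (fun x => σ * u' x * (τ * v x) - σ * u x * (τ * v' x)) b := by
      have := (hu b hb).continuousAt
      have := (hv b hb).continuousAt
      have := (hu' b hb).continuousAt
      have := (hv' b hb).continuousAt
      fun_prop
    exact this.tendsto.mono_left nhdsWithin_le_nhds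
  have hB0 : σ * u' b * (τ * v b) - σ * u b * (τ * v' b) ≤ 0 := by
    have h1 : σ * u' b ≤ 0 := deriv_left hab ((hu b hb).const_mul σ) (by rw [hub, mul_zero]) hup
    have h2 : 0 ≤ τ * v b := by
      have hc := ((hv b hb).continuousAt.const_mul τ).tendsto.mono_left (nhdsWithin_le_nhds (s := Iio b))
      refine ge_of_tendsto hc ?_
      filter_upwards [Ioo_mem_nhdsLT hab] with x hx using (hvp x hx).le
    rw [hub]; nlinarith
  have hA' : ∃ A, 0 ≤ A ∧ Tendsto (fun x => σ * u' x * (τ * v x) - σ * u x * (τ * v' x)) (𝓝[>] a) (𝓝 A) := by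
    rcases hA with hA | ⟨h0, h1, h2, h3, h4⟩
    · refine ⟨0, le_rfl, ?_⟩
      have := hA.const_mul (σ * τ)
      rw [mul_zero] at this
      refine this.congr (fun x => by ring)
    · refine ⟨σ * u' a * (τ * v a) - σ * u a * (τ * v' a), ?_, ?_⟩
      · have h5 : 0 ≤ σ * u' a := deriv_right hab (h1.const_mul σ) (by rw [h0, mul_zero]) hup
        have h6 : 0 ≤ τ * v a := by
          have hc := (h3.continuousAt.const_mul τ).tendsto.mono_left (nhdsWithin_le_nhds (s := Ioi a))
          refine ge_of_tendsto hc ?_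
          filter_upwards [Ioo_mem_nhdsGT hab] with x hx using (hvp x hx).le
        rw [h0]
        have := mul_nonneg h5 h6
        linarith
      · have : ContinuousAt (fun x => σ * u' x * (τ * v x) - σ * u x * (τ * v' x)) a := by
          have := h1.continuousAt
          have := h2.continuousAt
          have := h3.continuousAt
          have := h4.continuousAt
          fun_prop
        exact this.tendsto.mono_left nhdsWithin_le_nhds
  obtain ⟨A, hA0, hA⟩ := hA'
  have io : ∀ {x}, x ∈ Ioo a b → x ∈ Ioc a b := fun h => Ioo_subset_Ioc_self h
  exact sturm_pos (u := fun x => σ * u x) (u' := fun x => σ * u' x) (v := fun x => τ * v x)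
    (v' := fun x => τ * v' x) (q := q) (Q := Q) hab
    (fun x hx => (hu x (io hx)).const_mul σ)
    (fun x hx => ((hu' x (io hx)).const_mul σ).congr_deriv (by ring))
    (fun x hx => (hv x (io hx)).const_mul τ)
    (fun x hx => ((hv' x (io hx)).const_mul τ).congr_deriv (by ring))
    hq hup hvp hA hB hA0 hB0

lemma sturm_reg {a b : ℝ} {u u' v v' q Q : ℝ → ℝ} (hab : a < b)
    (hu : ∀ x ∈ Icc a b, HasDerivAt u (u' x) x) (hu' : ∀ x ∈ Icc a b, HasDerivAt u' (-(q x) * u x) x)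
    (hv : ∀ x ∈ Icc a b, HasDerivAt v (v' x) x) (hv' : ∀ x ∈ Icc a b, HasDerivAt v' (-(Q x) * v x) x)
    (hq : ∀ x ∈ Ioo a b, q x < Q x)
    (hun : ∀ x ∈ Ioo a b, u x ≠ 0) (hua : u a = 0) (hub : u b = 0) :
    ∃ x ∈ Ioo a b, v x = 0 := by
  have ic : ∀ {x}, x ∈ Ioc a b → x ∈ Icc a b := fun h => Ioc_subset_Icc_self h
  have ha : a ∈ Icc a b := ⟨le_rfl, hab.le⟩
  exact sturm_gen hab (fun x hx => hu x (ic hx)) (fun x hx => hu' x (ic hx)) (fun x hx => hv x (ic hx))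
    (fun x hx => hv' x (ic hx)) hq hun hub (Or.inr ⟨hua, hu a ha, hu' a ha, hv a ha, hv' a ha⟩)

lemma enum_set {S : Set ℝ} (hS0 : ∀ s ∈ S, 0 < s) (hfin : ∀ X, {t | t ∈ S ∧ t < X}.Finite)
    (hunb : ∀ X, ∃ s ∈ S, X < s) :
    ∃ a : ℕ → ℝ, StrictMono a ∧ (∀ n, a n ∈ S) ∧ ∀ s ∈ S, ∃ n, a n = s := by
  have hmin : ∀ X, ∃ m ∈ S, X < m ∧ ∀ s ∈ S, X < s → m ≤ s := by
    intro X
    obtain ⟨s, hs, hXs⟩ := hunb X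
    have hf : {t | t ∈ S ∧ X < t ∧ t < s + 1}.Finite :=
      (hfin (s + 1)).subset (fun t ht => ⟨ht.1, ht.2.2⟩)
    obtain ⟨m, hm⟩ := hf.exists_minimal ⟨s, hs, hXs, by linarith⟩
    refine ⟨m, hm.1.1, hm.1.2.1, fun t ht hXt => ?_⟩
    by_contra hlt
    have hlt := not_le.1 hlt
    have := hm.2 (y := t) ⟨ht, hXt, hlt.trans hm.1.2.2⟩ hlt.le
    linarith
  choose f hf1 hf2 hf3 using hmin
  let a : ℕ → ℝ := fun n => Nat.rec (f 0) (fun _ x => f x) n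
  have ha0 : a 0 = f 0 := rfl
  have has : ∀ n, a (n + 1) = f (a n) := fun n => rfl
  have hmono : StrictMono a := strictMono_nat_of_lt_succ (fun n => by rw [has]; exact hf2 _)
  have hmem : ∀ n, a n ∈ S := by
    intro n
    cases n with
    | zero => exact hf1 _
    | succ n => exact hf1 _
  refine ⟨a, hmono, hmem, fun s hs => ?_⟩
  by_contra hne
  push Not at hne
  have hlt : ∀ n, a n < s := by
    intro n
    induction n with
    | zero => exact lt_of_le_of_ne (hf3 0 s hs (hS0 s hs)) (hne 0)
    | succ n ih => exact lt_of_le_of_ne (hf3 _ s hs ih) (hne (n + 1))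
  have : (range a).Finite := (hfin s).subset (by rintro _ ⟨n, rfl⟩; exact ⟨hmem n, hlt n⟩)
  exact Set.infinite_range_of_injective hmono.injective this

noncomputable def bPh (ν x : ℝ) : ℝ := √(x ^ 2 - ν ^ 2) - ν * Real.arccos (ν / x)

lemma sq_sub_pos' {ν x : ℝ} (hν : 0 < ν) (hx : ν < x) : 0 < x ^ 2 - ν ^ 2 := by nlinarith

lemma sqrt_d {ν x : ℝ} (hν : 0 < ν) (hx : ν < x) :
    HasDerivAt (fun x : ℝ => √(x ^ 2 - ν ^ 2)) (x / √(x ^ 2 - ν ^ 2)) x := by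
  have h0 := sq_sub_pos' hν hx
  have h := ((hasDerivAt_pow 2 x).sub_const (ν ^ 2)).sqrt h0.ne'
  refine h.congr_deriv ?_
  have : √(x ^ 2 - ν ^ 2) ≠ 0 := by positivity
  field_simp
  simp

lemma bPh_d {ν x : ℝ} (hν : 0 < ν) (hx : ν < x) : HasDerivAt (bPh ν) (√(x ^ 2 - ν ^ 2) / x) x := by
  have h0 := sq_sub_pos' hν hx
  have hx0 : 0 < x := hν.trans hx
  have h1 := sqrt_d hν hx
  have h2 : HasDerivAt (fun x : ℝ => ν / x) (-ν / x ^ 2) x :=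
    ((hasDerivAt_const x ν).div (hasDerivAt_id x) hx0.ne').congr_deriv (by simp)
  have hlt : ν / x < 1 := (div_lt_one hx0).2 hx
  have hgt : 0 < ν / x := by positivity
  have h3 := (Real.hasDerivAt_arccos (x := ν / x) (by linarith) (by linarith)).comp x h2
  have h := h1.sub (h3.const_mul ν)
  refine h.congr_deriv ?_
  have e : √(1 - (ν / x) ^ 2) = √(x ^ 2 - ν ^ 2) / x := by
    rw [show 1 - (ν / x) ^ 2 = (x ^ 2 - ν ^ 2) / x ^ 2 by field_simp, Real.sqrt_div h0.le,
      Real.sqrt_sq hx0.le]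
  rw [e]
  have hs : √(x ^ 2 - ν ^ 2) ≠ 0 := by positivity
  have hq : √(x ^ 2 - ν ^ 2) ^ 2 = x ^ 2 - ν ^ 2 := Real.sq_sqrt h0.le
  generalize √(x ^ 2 - ν ^ 2) = s at *
  field_simp
  rw [hq]

noncomputable def bK (ν x : ℝ) : ℝ := Real.exp (1 / 2 * Real.log x - 1 / 4 * Real.log (x ^ 2 - ν ^ 2))

noncomputable def bL (ν x : ℝ) : ℝ := 1 / (2 * x) - x / (2 * (x ^ 2 - ν ^ 2))

lemma bK_d {ν x : ℝ} (hν : 0 < ν) (hx : ν < x) : HasDerivAt (bK ν) (bK ν x * bL ν x) x := by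
  have h0 := sq_sub_pos' hν hx
  have hx0 : 0 < x := hν.trans hx
  have h := ((((Real.hasDerivAt_log hx0.ne').const_mul (1 / 2)).sub
    ((((hasDerivAt_pow 2 x).sub_const (ν ^ 2)).log h0.ne').const_mul (1 / 4)))).exp
  refine h.congr_deriv ?_
  unfold bL bK
  congr 1
  field_simp
  simp
  ring

lemma bL_d {ν x : ℝ} (hν : 0 < ν) (hx : ν < x) :
    HasDerivAt (bL ν) (ν ^ 2 * (3 * x ^ 2 - ν ^ 2) / (2 * x ^ 2 * (x ^ 2 - ν ^ 2) ^ 2)) x := by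
  have h0 := sq_sub_pos' hν hx
  have hx0 : 0 < x := hν.trans hx
  have h1 : HasDerivAt (fun x : ℝ => 1 / (2 * x)) (-2 / (2 * x) ^ 2) x :=
    ((hasDerivAt_const x (1:ℝ)).div ((hasDerivAt_id x).const_mul 2) (by simp; exact hx0.ne')).congr_deriv (by simp)
  have h2 : HasDerivAt (fun x : ℝ => x / (2 * (x ^ 2 - ν ^ 2)))
      ((1 * (2 * (x ^ 2 - ν ^ 2)) - x * (2 * (2 * x))) / (2 * (x ^ 2 - ν ^ 2)) ^ 2) x :=
    ((hasDerivAt_id x).div (((hasDerivAt_pow 2 x).sub_const (ν ^ 2)).const_mul 2) (by positivity)).congr_deriv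
      (by simp)
  refine (h1.sub h2).congr_deriv ?_
  field_simp
  ring

noncomputable def bv (ν ω c x : ℝ) : ℝ := bK ν x * Real.sin (ω * (bPh ν x - c))

noncomputable def bv' (ν ω c x : ℝ) : ℝ :=
  bK ν x * (bL ν x * Real.sin (ω * (bPh ν x - c)) + ω * (√(x ^ 2 - ν ^ 2) / x) * Real.cos (ω * (bPh ν x - c)))

noncomputable def bQ (ν ω x : ℝ) : ℝ :=
  ω ^ 2 * ((x ^ 2 - ν ^ 2) / x ^ 2) - ν ^ 2 * (6 * x ^ 2 - ν ^ 2) / (4 * x ^ 2 * (x ^ 2 - ν ^ 2) ^ 2)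

lemma th_d {ν x : ℝ} (ω c : ℝ) (hν : 0 < ν) (hx : ν < x) :
    HasDerivAt (fun x => ω * (bPh ν x - c)) (ω * (√(x ^ 2 - ν ^ 2) / x)) x :=
  ((bPh_d hν hx).sub_const c).const_mul ω

lemma bv_d {ν x : ℝ} (ω c : ℝ) (hν : 0 < ν) (hx : ν < x) : HasDerivAt (bv ν ω c) (bv' ν ω c x) x := by
  have h := (bK_d hν hx).mul (th_d ω c hν hx).sin
  refine h.congr_deriv ?_
  unfold bv'; ring

lemma bv'_d {ν x : ℝ} (ω c : ℝ) (hν : 0 < ν) (hx : ν < x) :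
    HasDerivAt (bv' ν ω c) (-(bQ ν ω x) * bv ν ω c x) x := by
  have h0 := sq_sub_pos' hν hx
  have hx0 : 0 < x := hν.trans hx
  have hp : HasDerivAt (fun x : ℝ => √(x ^ 2 - ν ^ 2) / x)
      ((x / √(x ^ 2 - ν ^ 2) * x - √(x ^ 2 - ν ^ 2) * 1) / x ^ 2) x :=
    (sqrt_d hν hx).div (hasDerivAt_id x) hx0.ne'
  have h := (bK_d hν hx).mul (((bL_d hν hx).mul (th_d ω c hν hx).sin).add
    ((hp.const_mul ω).mul (th_d ω c hν hx).cos))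
  refine h.congr_deriv ?_
  have hs : √(x ^ 2 - ν ^ 2) ≠ 0 := by positivity
  have hq : √(x ^ 2 - ν ^ 2) ^ 2 = x ^ 2 - ν ^ 2 := Real.sq_sqrt h0.le
  have e1 : bL ν x * (√(x ^ 2 - ν ^ 2) / x) * 2 +
    (x / √(x ^ 2 - ν ^ 2) * x - √(x ^ 2 - ν ^ 2) * 1) / x ^ 2 = 0 := by
    unfold bL
    generalize √(x ^ 2 - ν ^ 2) = s at *
    rw [← hq]
    field_simp
    ring
  have e2 : bL ν x ^ 2 + ν ^ 2 * (3 * x ^ 2 - ν ^ 2) / (2 * x ^ 2 * (x ^ 2 - ν ^ 2) ^ 2)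
      - ω ^ 2 * (√(x ^ 2 - ν ^ 2) / x) ^ 2 = - bQ ν ω x := by
    unfold bL bQ
    rw [div_pow, hq]
    field_simp
    ring
  rw [← e2]
  unfold bv
  simp only [Pi.mul_apply, Pi.add_apply]
  linear_combination (bK ν x * ω * Real.cos (ω * (bPh ν x - c))) * e1

lemma bQ_one_lt {ν x : ℝ} (hν : 0 < ν) (hx : ν < x) : bQ ν 1 x < bq ν x := by
  have h0 := sq_sub_pos' hν hx
  have hx0 : 0 < x := hν.trans hx
  have : bq ν x - bQ ν 1 x = (x ^ 2 + 4 * ν ^ 2) / (4 * (x ^ 2 - ν ^ 2) ^ 2) := by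
    unfold bq bQ
    field_simp
    ring
  have h2 : 0 < (x ^ 2 + 4 * ν ^ 2) / (4 * (x ^ 2 - ν ^ 2) ^ 2) := by positivity
  linarith

lemma bQ_sub {ν x : ℝ} (ω : ℝ) (hν : 0 < ν) (hx : ν < x) : bQ ν ω x - bq ν x =
    (ω ^ 2 - 1) * ((x ^ 2 - ν ^ 2) / x ^ 2) - (x ^ 2 + 4 * ν ^ 2) / (4 * (x ^ 2 - ν ^ 2) ^ 2) := by
  have h0 := sq_sub_pos' hν hx
  have hx0 : 0 < x := hν.trans hx
  unfold bq bQ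
  field_simp
  ring

lemma bPh_smono {ν : ℝ} (hν : 0 < ν) : StrictMonoOn (bPh ν) (Ioi ν) :=
  smono_of_deriv (convex_Ioi ν) (fun x hx => bPh_d hν hx) (fun x hx => by
    have h0 := sq_sub_pos' hν hx
    have hx0 : 0 < x := hν.trans hx
    positivity)

lemma bK_pos (ν x : ℝ) : 0 < bK ν x := Real.exp_pos _

lemma gap_lt {ν a b : ℝ} (hν : 0 < ν) (ha : ν < a) (hab : a < b) (h : π ≤ bPh ν b - bPh ν a) :
    ∃ x ∈ Ioo a b, bU ν x = 0 := by
  have hcont : ContinuousOn (bPh ν) (Icc a b) := fun x hx =>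
    (bPh_d hν (lt_of_lt_of_le ha hx.1)).continuousAt.continuousWithinAt
  obtain ⟨c, hc, hce⟩ := intermediate_value_Icc hab.le hcont
    (show bPh ν a + π ∈ Icc (bPh ν a) (bPh ν b) from ⟨by linarith [Real.pi_pos], by linarith⟩)
  have hac : a < c := by
    rcases eq_or_lt_of_le hc.1 with h1 | h1
    · subst h1; linarith [Real.pi_pos]
    · exact h1
  obtain ⟨x, hx, hx0⟩ := sturm_reg (u := bv ν 1 (bPh ν a)) (u' := bv' ν 1 (bPh ν a)) (v := bU ν) (v' := bD ν)
    (q := bQ ν 1) (Q := bq ν) hac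
    (fun x hx => bv_d _ _ hν (lt_of_lt_of_le ha hx.1)) (fun x hx => bv'_d _ _ hν (lt_of_lt_of_le ha hx.1))
    (fun x hx => bU_d hν.le (hν.trans (lt_of_lt_of_le ha hx.1)))
    (fun x hx => bD_d hν.le (hν.trans (lt_of_lt_of_le ha hx.1)))
    (fun x hx => bQ_one_lt hν (ha.trans hx.1))
    (fun x hx => by
      have h1 := bPh_smono hν (show a ∈ Ioi ν from ha) (show x ∈ Ioi ν from ha.trans hx.1) hx.1
      have h2 := bPh_smono hν (show x ∈ Ioi ν from ha.trans hx.1) (show c ∈ Ioi ν from ha.trans hac) hx.2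
      have := Real.sin_pos_of_pos_of_lt_pi (x := 1 * (bPh ν x - bPh ν a)) (by linarith) (by linarith)
      have h3 := bK_pos ν x
      unfold bv
      positivity)
    (by simp [bv]) (by simp [bv, hce])
  exact ⟨x, ⟨hx.1, lt_of_lt_of_le hx.2 hc.2⟩, hx0⟩

lemma gap_gt {ν a b ω : ℝ} (hν : 0 < ν) (ha : ν < a) (hab : a < b) (hω : 0 < ω)
    (hua : bU ν a = 0) (hub : bU ν b = 0) (hun : ∀ x ∈ Ioo a b, bU ν x ≠ 0)
    (hq : ∀ x ∈ Ioo a b, bq ν x < bQ ν ω x) : π < ω * (bPh ν b - bPh ν a) := by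
  obtain ⟨x, hx, hx0⟩ := sturm_reg (v := bv ν ω (bPh ν a)) (v' := bv' ν ω (bPh ν a)) (u := bU ν) (u' := bD ν)
    (Q := bQ ν ω) (q := bq ν) hab
    (fun x hx => bU_d hν.le (hν.trans (lt_of_lt_of_le ha hx.1)))
    (fun x hx => bD_d hν.le (hν.trans (lt_of_lt_of_le ha hx.1)))
    (fun x hx => bv_d _ _ hν (lt_of_lt_of_le ha hx.1)) (fun x hx => bv'_d _ _ hν (lt_of_lt_of_le ha hx.1))
    hq hun hua hub
  have h1 := bPh_smono hν (show a ∈ Ioi ν from ha) (show x ∈ Ioi ν from ha.trans hx.1) hx.1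
  have h2 := bPh_smono hν (show x ∈ Ioi ν from ha.trans hx.1) (show b ∈ Ioi ν from ha.trans hab) hx.2
  by_contra hle
  have hle := not_lt.1 hle
  have h3 : 0 < ω * (bPh ν x - bPh ν a) := mul_pos hω (by linarith)
  have h4 : ω * (bPh ν x - bPh ν a) < π := lt_of_lt_of_le (mul_lt_mul_of_pos_left (by linarith) hω) hle
  have := Real.sin_pos_of_pos_of_lt_pi h3 h4
  have h5 := mul_pos (bK_pos ν x) this
  unfold bv at hx0
  linarith

lemma gap_pi {ν a b : ℝ} (hν : 1 / 2 ≤ ν) (ha : 0 < a) (hab : a < b)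
    (hua : bU ν a = 0) (hub : bU ν b = 0) (hun : ∀ x ∈ Ioo a b, bU ν x ≠ 0) : π ≤ b - a := by
  have key : ∀ ω : ℝ, 1 < ω → π < ω * (b - a) := by
    intro ω hω
    have hd : ∀ x, HasDerivAt (fun x : ℝ => ω * (x - a)) ω x := fun x => by
      simpa using ((hasDerivAt_id x).sub_const a).const_mul ω
    obtain ⟨x, hx, hx0⟩ := sturm_reg (v := fun x => Real.sin (ω * (x - a)))
      (v' := fun x => Real.cos (ω * (x - a)) * ω) (u := bU ν) (u' := bD ν)
      (Q := fun _ => ω ^ 2) (q := bq ν) hab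
      (fun x hx => bU_d (by linarith) (lt_of_lt_of_le ha hx.1))
      (fun x hx => bD_d (by linarith) (lt_of_lt_of_le ha hx.1))
      (fun x hx => (hd x).sin) (fun x hx => ((hd x).cos.mul_const ω).congr_deriv (by ring))
      (fun x hx => by
        have hx0 : 0 < x := ha.trans hx.1
        have : 0 ≤ (ν ^ 2 - 1 / 4) / x ^ 2 := div_nonneg (by nlinarith) (by positivity)
        unfold bq
        nlinarith) hun hua hub
    by_contra hle
    have hle := not_lt.1 hle
    have h3 : 0 < ω * (x - a) := mul_pos (by linarith) (by linarith [hx.1])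
    have h4 : ω * (x - a) < π := lt_of_lt_of_le (mul_lt_mul_of_pos_left (by linarith [hx.2]) (by linarith)) hle
    have := Real.sin_pos_of_pos_of_lt_pi h3 h4
    linarith
  by_contra hlt
  have hlt := not_le.1 hlt
  have := key (π / (b - a)) ((one_lt_div (by linarith)).2 hlt)
  rw [div_mul_cancel₀ _ (by linarith)] at this
  exact lt_irrefl _ this

lemma zero_gt {ν t : ℝ} (hν : 1 / 2 ≤ ν) (ht : 0 < t) (h0 : bU ν t = 0) : ν < t := by
  by_contra hle
  have hle := not_lt.1 hle
  have hν0 : 0 < ν := by linarith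
  have hd : ∀ x > 0, HasDerivAt (fun x => bU ν x * bD ν x - bU ν x ^ 2 / (2 * x))
      ((bD ν x - bU ν x / (2 * x)) ^ 2 + bU ν x ^ 2 * (ν ^ 2 / x ^ 2 - 1)) x := by
    intro x hx
    have h := ((bU_d hν0.le hx).mul (bD_d hν0.le hx)).sub
      (((bU_d hν0.le hx).pow 2).div ((hasDerivAt_id x).const_mul 2) (by simp; exact hx.ne'))
    refine h.congr_deriv ?_
    unfold bq
    simp
    field_simp
    ring
  have hA : Tendsto (fun x => bU ν x * bD ν x - bU ν x ^ 2 / (2 * x)) (𝓝[>] 0) (𝓝 0) := by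
    have h1 := ((bessel_tendsto hν0).pow 2).const_mul ν
    have h2 := (bU_tendsto hν0).mul (bU_tendsto (ν := ν + 1) (by linarith))
    have h3 := h1.sub h2
    simp only [ne_eq, OfNat.ofNat_ne_zero, not_false_eq_true, zero_pow, mul_zero, sub_zero] at h3
    refine h3.congr' ?_
    filter_upwards [self_mem_nhdsWithin] with x hx
    have hx : 0 < x := hx
    unfold bD bU
    have hq : √x ^ 2 = x := Real.sq_sqrt hx.le
    have hs : √x ≠ 0 := by positivity
    generalize √x = s at *
    subst hq
    field_simp
    ring
  have hB : Tendsto (fun x => bU ν x * bD ν x - bU ν x ^ 2 / (2 * x)) (𝓝[<] t)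
      (𝓝 (bU ν t * bD ν t - bU ν t ^ 2 / (2 * t))) :=
    (hd t ht).continuousAt.tendsto.mono_left nhdsWithin_le_nhds
  have := sturm_core ht (fun x hx => hd x hx.1) (fun x hx => by
    have hx0 : 0 < x := hx.1
    have hlt : x < ν := lt_of_lt_of_le hx.2 hle
    have h1 : 0 < ν ^ 2 / x ^ 2 - 1 := by
      rw [sub_pos, one_lt_div (by positivity)]; nlinarith
    by_cases hU : bU ν x = 0
    · have := bD_ne hν hx0 hU
      rw [hU]; simp; positivity
    · positivity) hA hB
  simp [h0] at this

lemma cmp_order {ν μ a b : ℝ} (hν : 1 / 2 ≤ ν) (hνμ : ν < μ) (ha : 0 ≤ a) (hab : a < b)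
    (hub : bU μ b = 0) (hun : ∀ x ∈ Ioo a b, bU μ x ≠ 0) (hua : a = 0 ∨ bU μ a = 0) :
    ∃ x ∈ Ioo a b, bU ν x = 0 := by
  have hν0 : 0 < ν := by linarith
  have hμ0 : 0 < μ := by linarith
  refine sturm_gen (u := bU μ) (u' := bD μ) (v := bU ν) (v' := bD ν) (q := bq μ) (Q := bq ν) hab
    (fun x hx => bU_d hμ0.le (lt_of_le_of_lt ha hx.1)) (fun x hx => bD_d hμ0.le (lt_of_le_of_lt ha hx.1))
    (fun x hx => bU_d hν0.le (lt_of_le_of_lt ha hx.1)) (fun x hx => bD_d hν0.le (lt_of_le_of_lt ha hx.1))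
    (fun x hx => ?_) hun hub ?_
  · have hx0 : 0 < x := lt_of_le_of_lt ha hx.1
    unfold bq
    have : (ν ^ 2 - 1 / 4) / x ^ 2 < (μ ^ 2 - 1 / 4) / x ^ 2 := by gcongr
    linarith
  · rcases eq_or_lt_of_le ha with h | h
    · left
      subst h
      have h1 := ((bessel_tendsto hμ0).mul (bessel_tendsto hν0)).const_mul (μ - ν)
      have h2 := (bU_tendsto (ν := μ + 1) (by linarith)).mul (bU_tendsto hν0)
      have h3 := (bU_tendsto hμ0).mul (bU_tendsto (ν := ν + 1) (by linarith))
      have h4 := (h1.sub h2).add h3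
      simp only [mul_zero, sub_zero, add_zero] at h4
      refine h4.congr' ?_
      filter_upwards [self_mem_nhdsWithin] with x hx
      have hx : 0 < x := hx
      unfold bD bU
      have hq : √x ^ 2 = x := Real.sq_sqrt hx.le
      have hs : √x ≠ 0 := by positivity
      generalize √x = s at *
      subst hq
      field_simp
      ring
    · right
      refine ⟨hua.resolve_left h.ne', bU_d hμ0.le h, bD_d hμ0.le h, bU_d hν0.le h, bD_d hν0.le h⟩

lemma rolle_order {ν a b : ℝ} (hν : 0 ≤ ν) (ha : 0 < a) (hab : a < b) (hua : bU ν a = 0) (hub : bU ν b = 0) :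
    ∃ x ∈ Ioo a b, bU (ν + 1) x = 0 := by
  have hd : ∀ x > 0, HasDerivAt (fun x => bU ν x * Real.exp (-(ν + 1 / 2) * Real.log x))
      (-(bU (ν + 1) x * Real.exp (-(ν + 1 / 2) * Real.log x))) x := by
    intro x hx
    have h := (bU_hasDerivAt hν hx).mul ((Real.hasDerivAt_log hx.ne').const_mul (-(ν + 1 / 2))).exp
    refine h.congr_deriv ?_
    field_simp
    ring
  obtain ⟨x, hx, hx0⟩ := exists_hasDerivAt_eq_zero hab
    (fun x hx => (hd x (lt_of_lt_of_le ha hx.1)).continuousAt.continuousWithinAt) (by simp [hua, hub])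
    (fun x hx => hd x (ha.trans hx.1))
  refine ⟨x, hx, ?_⟩
  simpa using hx0

lemma bPh_lim {ν : ℝ} (hν : 0 < ν) : Tendsto (fun x => x - bPh ν x) atTop (𝓝 (ν * (π / 2))) := by
  have h1 : Tendsto (fun x : ℝ => x - √(x ^ 2 - ν ^ 2)) atTop (𝓝 0) := by
    have hz : Tendsto (fun x : ℝ => ν ^ 2 / x) atTop (𝓝 0) := tendsto_const_nhds.div_atTop tendsto_id
    refine tendsto_of_tendsto_of_tendsto_of_le_of_le' tendsto_const_nhds hz ?_ ?_
    · filter_upwards [eventually_gt_atTop ν] with x hx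
      have : √(x ^ 2 - ν ^ 2) ≤ x := Real.sqrt_le_iff.2 ⟨by linarith, by nlinarith⟩
      linarith
    · filter_upwards [eventually_gt_atTop ν] with x hx
      have hx0 : 0 < x := hν.trans hx
      have : x - ν ^ 2 / x ≤ √(x ^ 2 - ν ^ 2) := by
        apply Real.le_sqrt_of_sq_le
        have e : (x - ν ^ 2 / x) ^ 2 = x ^ 2 - ν ^ 2 - (ν ^ 2 / x ^ 2) * (x ^ 2 - ν ^ 2) := by
          field_simp
        rw [e]
        have := sq_sub_pos' hν hx
        have : 0 ≤ (ν ^ 2 / x ^ 2) * (x ^ 2 - ν ^ 2) := by positivity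
        linarith
      linarith
  have h2 : Tendsto (fun x : ℝ => ν * Real.arccos (ν / x)) atTop (𝓝 (ν * (π / 2))) := by
    have hz : Tendsto (fun x : ℝ => ν / x) atTop (𝓝 0) := tendsto_const_nhds.div_atTop tendsto_id
    have := (Real.continuous_arccos.tendsto 0).comp hz
    rw [Real.arccos_zero] at this
    exact this.const_mul ν
  have h3 := h1.add h2
  rw [zero_add] at h3
  refine h3.congr (fun x => ?_)
  unfold bPh; ring

structure IsZ (ν : ℝ) (a : ℕ → ℝ) : Prop where
  mono : StrictMono a
  pos : ∀ n, 0 < a n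
  zero : ∀ n, bU ν (a n) = 0
  surj : ∀ t, 0 < t → bU ν t = 0 → ∃ n, a n = t

lemma IsZ.between {ν : ℝ} {a : ℕ → ℝ} (h : IsZ ν a) (n : ℕ) : ∀ x ∈ Ioo (a n) (a (n + 1)), bU ν x ≠ 0 := by
  intro x hx h0
  obtain ⟨m, rfl⟩ := h.surj x ((h.pos n).trans hx.1) h0
  have h1 := h.mono.lt_iff_lt.1 hx.1
  have h2 := h.mono.lt_iff_lt.1 hx.2
  omega

lemma IsZ.before {ν : ℝ} {a : ℕ → ℝ} (h : IsZ ν a) : ∀ x ∈ Ioo 0 (a 0), bU ν x ≠ 0 := by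
  intro x hx h0
  obtain ⟨m, rfl⟩ := h.surj x hx.1 h0
  have h2 := h.mono.lt_iff_lt.1 hx.2
  omega

lemma exists_Z {ν : ℝ} (hν : 1 / 2 ≤ ν) : ∃ a, IsZ ν a := by
  have hν0 : 0 < ν := by linarith
  obtain ⟨a, h1, h2, h3⟩ := enum_set (S := {t | 0 < t ∧ bU ν t = 0}) (fun s hs => hs.1)
    (fun X => (zeros_finite hν X).subset (fun t ht => ⟨⟨ht.1.1, ht.2⟩, ht.1.2⟩))
    (fun X => by
      set a := max X ν + 1 with ha
      have haX : X < a := by linarith [le_max_left X ν]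
      have haν : ν < a := by linarith [le_max_right X ν]
      have hl := (bPh_lim hν0).eventually (gt_mem_nhds (show ν * (π / 2) < ν * (π / 2) + 1 by linarith))
      obtain ⟨b, hb1, hb2, hb3⟩ := (hl.and ((eventually_gt_atTop a).and
        (eventually_gt_atTop (ν * (π / 2) + 1 + bPh ν a + π)))).exists
      obtain ⟨x, hx, hx0⟩ := gap_lt hν0 haν hb2 (by linarith)
      exact ⟨x, ⟨(hν0.trans haν).trans hx.1, hx0⟩, haX.trans hx.1⟩)
  exact ⟨a, h1, fun n => (h2 n).1, fun n => (h2 n).2, fun t ht h0 => h3 t ⟨ht, h0⟩⟩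

lemma seq_cmp {a b : ℕ → ℝ} (ha : StrictMono a) (hb : StrictMono b) (i : ℕ → ℕ)
    (h1 : ∀ k, a (i k) < b k) (h2 : ∀ k, b k < a (i (k + 1))) : ∀ k, a k < b k := by
  have him : StrictMono i := strictMono_nat_of_lt_succ (fun k => ha.lt_iff_lt.1 ((h1 k).trans (h2 k)))
  intro k
  exact lt_of_le_of_lt (ha.monotone (him.id_le k)) (h1 k)

lemma Z_lt {ν μ : ℝ} {a b : ℕ → ℝ} (hν : 1 / 2 ≤ ν) (hνμ : ν < μ) (ha : IsZ ν a) (hb : IsZ μ b) (k : ℕ) :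
    a k < b k := by
  have h0 : ∃ i, a i < b 0 := by
    obtain ⟨x, hx, hx0⟩ := cmp_order hν hνμ le_rfl (hb.pos 0) (hb.zero 0) hb.before (Or.inl rfl)
    obtain ⟨i, rfl⟩ := ha.surj x hx.1 hx0
    exact ⟨i, hx.2⟩
  have hs : ∀ k, ∃ i, b k < a i ∧ a i < b (k + 1) := by
    intro k
    obtain ⟨x, hx, hx0⟩ := cmp_order hν hνμ (hb.pos k).le (hb.mono (Nat.lt_succ_self k)) (hb.zero (k + 1))
      (hb.between k) (Or.inr (hb.zero k))
    obtain ⟨i, rfl⟩ := ha.surj x ((hb.pos k).trans hx.1) hx0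
    exact ⟨i, hx⟩
  obtain ⟨i0, hi0⟩ := h0
  choose i hi using hs
  exact seq_cmp ha.mono hb.mono (fun k => Nat.casesOn k i0 i)
    (fun k => by cases k with | zero => exact hi0 | succ k => exact (hi k).2) (fun k => (hi k).1) k

lemma Z_lt' {ν : ℝ} {a b : ℕ → ℝ} (hν : 0 ≤ ν) (ha : IsZ ν a) (hb : IsZ (ν + 1) b) (k : ℕ) :
    b k < a (k + 1) := by
  have hs : ∀ k, ∃ i, a k < b i ∧ b i < a (k + 1) := by
    intro k
    obtain ⟨x, hx, hx0⟩ := rolle_order hν (ha.pos k) (ha.mono (Nat.lt_succ_self k)) (ha.zero k) (ha.zero (k + 1))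
    obtain ⟨i, rfl⟩ := hb.surj x ((ha.pos k).trans hx.1) hx0
    exact ⟨i, hx⟩
  choose i hi using hs
  exact seq_cmp hb.mono (b := fun k => a (k + 1)) (fun m n h => ha.mono (by omega)) i
    (fun k => (hi k).2) (fun k => (hi (k + 1)).1) k

lemma Z_anti {ν : ℝ} {a : ℕ → ℝ} (hν : 1 / 2 ≤ ν) (ha : IsZ ν a) :
    Antitone (fun n : ℕ => bPh ν (a n) - (n + 1) * π) := by
  apply antitone_nat_of_succ_le
  intro n
  by_contra h
  have h := not_le.1 h
  push_cast at h
  obtain ⟨x, hx, hx0⟩ := gap_lt (by linarith) (zero_gt hν (ha.pos n) (ha.zero n)) (ha.mono (Nat.lt_succ_self n))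
    (by linarith)
  exact ha.between n x hx hx0

lemma Z_mono {ν : ℝ} {a : ℕ → ℝ} (hν : 1 / 2 ≤ ν) (ha : IsZ ν a) :
    Monotone (fun n : ℕ => a n - (n + 1) * π) := by
  apply monotone_nat_of_le_succ
  intro n
  have := gap_pi hν (ha.pos n) (ha.mono (Nat.lt_succ_self n)) (ha.zero n) (ha.zero (n + 1)) (ha.between n)
  push_cast
  linarith

lemma Z_atTop {ν : ℝ} {a : ℕ → ℝ} (hν : 1 / 2 ≤ ν) (ha : IsZ ν a) : Tendsto a atTop atTop := by
  have h1 : Tendsto (fun n : ℕ => a 0 + n * π) atTop atTop := by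
    apply tendsto_atTop_add_const_left
    exact tendsto_natCast_atTop_atTop.atTop_mul_const Real.pi_pos
  refine tendsto_atTop_mono (fun n => ?_) h1
  have := Z_mono hν ha (Nat.zero_le n)
  simp at this
  linarith

lemma Z_lim {ν : ℝ} {a : ℕ → ℝ} (hν : 1 / 2 ≤ ν) (ha : IsZ ν a) :
    ∃ M, Tendsto (fun n : ℕ => a n - (n + 1) * π) atTop (𝓝 M) := by
  have hl := ((bPh_lim (ν := ν) (by linarith)).comp (Z_atTop hν ha)).bddAbove_range
  obtain ⟨C, hC⟩ := hl
  refine ⟨_, tendsto_atTop_ciSup (Z_mono hν ha) ⟨C + (bPh ν (a 0) - π), ?_⟩⟩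
  rintro _ ⟨n, rfl⟩
  have h1 := hC ⟨n, rfl⟩
  have h2 := Z_anti hν ha (Nat.zero_le n)
  simp at h1 h2 ⊢
  linarith

/-- subexponential growth -/
def SubE (g : ℝ → ℂ) : Prop :=
  MeasureTheory.AEStronglyMeasurable g (MeasureTheory.volume.restrict (Ioi 0)) ∧
  ∀ δ : ℝ, 0 < δ → ∃ C : ℝ, ∀ s : ℝ, 0 < s → ‖g s‖ ≤ C * rexp (δ * s)

/-- Laplace transform -/
noncomputable def lap (g : ℝ → ℂ) (x : ℝ) : ℂ := ∫ s in Ioi (0:ℝ), ((rexp (-x * s) : ℝ) : ℂ) * g s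

lemma SubE.meas {g : ℝ → ℂ} (h : SubE g) (x : ℝ) :
    MeasureTheory.AEStronglyMeasurable (fun s : ℝ => ((rexp (-x * s) : ℝ) : ℂ) * g s)
      (MeasureTheory.volume.restrict (Ioi 0)) := by
  refine MeasureTheory.AEStronglyMeasurable.mul ?_ h.1
  exact (by fun_prop : Continuous (fun s : ℝ => ((rexp (-x * s) : ℝ) : ℂ))).aestronglyMeasurable

lemma SubE.mul_s {g : ℝ → ℂ} (h : SubE g) : SubE (fun s => (s : ℂ) * g s) := by
  refine ⟨MeasureTheory.AEStronglyMeasurable.mul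
    Complex.continuous_ofReal.aestronglyMeasurable h.1, fun δ hδ => ?_⟩
  obtain ⟨C, hC⟩ := h.2 (δ/2) (by positivity)
  refine ⟨2/δ * C, fun s hs => ?_⟩
  have h1 := hC s hs
  have h2 : s ≤ 2/δ * rexp (δ/2*s) := by
    have := Real.add_one_le_exp (δ/2*s)
    rw [div_mul_eq_mul_div, le_div_iff₀ hδ]; linarith
  have h3 : rexp (δ*s) = rexp (δ/2*s) * rexp (δ/2*s) := by
    rw [← Real.exp_add]; ring_nf
  rw [norm_mul, Complex.norm_real, Real.norm_of_nonneg hs.le, h3]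
  calc s * ‖g s‖ ≤ (2/δ * rexp (δ/2*s)) * (C * rexp (δ/2*s)) := by
        apply mul_le_mul h2 h1 (norm_nonneg _) (by positivity)
    _ = _ := by ring

lemma SubE.int {g : ℝ → ℂ} (h : SubE g) {x : ℝ} (hx : 0 < x) :
    MeasureTheory.IntegrableOn (fun s : ℝ => ((rexp (-x * s) : ℝ) : ℂ) * g s) (Ioi 0) := by
  obtain ⟨C, hC⟩ := h.2 (x/2) (by positivity)
  have h1 : MeasureTheory.IntegrableOn (fun s : ℝ => C * rexp (-(x/2) * s)) (Ioi 0) :=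
    (exp_neg_integrableOn_Ioi 0 (by positivity : 0 < x/2)).const_mul C
  refine MeasureTheory.Integrable.mono' h1 (h.meas x) ?_
  refine (MeasureTheory.ae_restrict_iff' measurableSet_Ioi).2 (Eventually.of_forall fun s hs => ?_)
  have hs : 0 < s := hs
  rw [norm_mul, Complex.norm_real, Real.norm_of_nonneg (Real.exp_pos _).le]
  calc rexp (-x*s) * ‖g s‖ ≤ rexp (-x*s) * (C * rexp (x/2*s)) := by
        gcongr; exact hC s hs
    _ = C * (rexp (-x*s) * rexp (x/2*s)) := by ring
    _ = _ := by rw [← Real.exp_add]; ring_nf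

lemma lap_d {g : ℝ → ℂ} (h : SubE g) {x : ℝ} (hx : 0 < x) :
    HasDerivAt (lap g) (- lap (fun s => (s:ℂ) * g s) x) x := by
  obtain ⟨C, hC⟩ := h.mul_s.2 (x/4) (by positivity)
  have h1 : MeasureTheory.IntegrableOn (fun s : ℝ => C * rexp (-(x/4) * s)) (Ioi 0) :=
    (exp_neg_integrableOn_Ioi 0 (by positivity : 0 < x/4)).const_mul C
  have key := hasDerivAt_integral_of_dominated_loc_of_deriv_le
    (μ := MeasureTheory.volume.restrict (Ioi (0:ℝ))) (𝕜 := ℝ)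
    (F := fun y s => ((rexp (-y * s) : ℝ) : ℂ) * g s)
    (F' := fun y s => -(((rexp (-y * s) : ℝ) : ℂ) * ((s:ℂ) * g s)))
    (bound := fun s => C * rexp (-(x/4) * s)) (x₀ := x) (s := Ioi (x/2))
    (Ioi_mem_nhds (by linarith)) (Eventually.of_forall fun y => h.meas y) (h.int hx)
    (h.mul_s.meas x).neg ?_ h1 ?_
  · refine key.2.congr_deriv ?_
    rw [lap, MeasureTheory.integral_neg]
  · refine (MeasureTheory.ae_restrict_iff' measurableSet_Ioi).2 (Eventually.of_forall fun s hs y hy => ?_)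
    have hs : 0 < s := hs
    have hy : x/2 < y := hy
    rw [norm_neg, norm_mul, Complex.norm_real, Real.norm_of_nonneg (Real.exp_pos _).le]
    have hC0 : 0 ≤ C * rexp (x/4*s) := le_trans (norm_nonneg _) (hC s hs)
    calc rexp (-y*s) * ‖(s:ℂ) * g s‖ ≤ rexp (-(x/2)*s) * (C * rexp (x/4*s)) := by
          apply mul_le_mul _ (hC s hs) (norm_nonneg _) (Real.exp_pos _).le
          apply Real.exp_le_exp.2; nlinarith
      _ = C * (rexp (-(x/2)*s) * rexp (x/4*s)) := by ring
      _ = _ := by rw [← Real.exp_add]; ring_nf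
  · refine Eventually.of_forall fun s y _ => ?_
    have h0 : HasDerivAt (fun y : ℝ => rexp (-y*s)) (rexp (-y*s) * (-s)) y := by
      have : HasDerivAt (fun y : ℝ => -y*s) (-s) y := by
        exact (((hasDerivAt_id y).neg).mul_const s).congr_deriv (by simp)
      exact this.exp
    refine (h0.ofReal_comp.mul_const (g s)).congr_deriv ?_
    push_cast; ring

/-- base -/
noncomputable def V (s : ℝ) : ℂ := (s : ℂ) - 2 * Complex.I

lemma V_slit (s : ℝ) : V s ∈ Complex.slitPlane := by
  right; simp [V]

lemma V_ne (s : ℝ) : V s ≠ 0 := Complex.slitPlane_ne_zero (V_slit s)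

lemma V_norm {s : ℝ} (hs : 0 ≤ s) : ‖V s‖ ≤ s + 2 := by
  unfold V
  refine (norm_sub_le _ _).trans ?_
  simp [abs_of_nonneg hs]

/-- integrand -/
noncomputable def gm (m : ℝ) (s : ℝ) : ℂ := ((s ^ m : ℝ) : ℂ) * V s ^ (m : ℂ)

lemma Vp_d (m s : ℝ) : HasDerivAt (fun s => V s ^ ((m+1 : ℝ) : ℂ)) (((m+1:ℝ):ℂ) * V s ^ (m:ℂ)) s := by
  have h : HasDerivAt (fun z : ℂ => z - 2 * Complex.I) 1 (s:ℂ) := (hasDerivAt_id _).sub_const _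
  have := (h.cpow_const (c := ((m+1:ℝ):ℂ)) (V_slit s)).comp_ofReal
  refine this.congr_deriv ?_
  have e : (((m+1:ℝ):ℂ) - 1) = (m:ℂ) := by push_cast; ring
  rw [e, mul_one]; rfl

lemma Vp_cont (m : ℝ) : Continuous (fun s => V s ^ (m:ℂ)) := by
  have hV : Continuous V := by unfold V; fun_prop
  exact hV.cpow continuous_const (fun s => V_slit s)

lemma pow_bound {m δ : ℝ} (hm : 0 < m) (hδ : 0 < δ) :
    ∃ C : ℝ, 0 < C ∧ ∀ s : ℝ, 0 < s → s ^ m * (s+2)^m ≤ C * rexp (δ*s) := by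
  set d := δ/m with hd
  have hd0 : 0 < d := by positivity
  refine ⟨(2/d+2/d^2)^m, by positivity, fun s hs => ?_⟩
  have h1 : d*s ≤ rexp (d*s) := by linarith [Real.add_one_le_exp (d*s)]
  have h2 : (d*s)^2/2 ≤ rexp (d*s) := by
    linarith [Real.quadratic_le_exp_of_nonneg (by positivity : 0 ≤ d*s), (by positivity : 0 < d*s)]
  have h3 : s*(s+2) ≤ (2/d+2/d^2) * rexp (d*s) := by
    have : s*(s+2) = 2/d^2 * ((d*s)^2/2) + 2/d*(d*s) := by field_simp
    rw [this, add_mul, add_comm]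
    gcongr
  rw [← Real.mul_rpow hs.le (by linarith)]
  calc (s*(s+2))^m ≤ ((2/d+2/d^2) * rexp (d*s))^m := Real.rpow_le_rpow (by positivity) h3 hm.le
    _ = (2/d+2/d^2)^m * rexp (d*s)^m := Real.mul_rpow (by positivity) (Real.exp_pos _).le
    _ = _ := by rw [← Real.exp_mul]; congr 2; rw [hd]; field_simp

lemma gm_norm {m s : ℝ} (hm : 0 < m) (hs : 0 ≤ s) : ‖gm m s‖ ≤ s^m * (s+2)^m := by
  unfold gm
  rw [norm_mul, Complex.norm_real, Real.norm_of_nonneg (by positivity), Complex.norm_cpow_real]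
  gcongr
  exact V_norm hs

lemma gm_cont {m : ℝ} (hm : 0 < m) : Continuous (gm m) := by
  unfold gm
  refine Continuous.mul (Complex.continuous_ofReal.comp ?_) (Vp_cont m)
  exact Real.continuous_rpow_const hm.le

lemma gm_sub {m : ℝ} (hm : 0 < m) : SubE (gm m) := by
  refine ⟨(gm_cont hm).aestronglyMeasurable, fun δ hδ => ?_⟩
  obtain ⟨C, -, hC⟩ := pow_bound hm hδ
  exact ⟨C, fun s hs => (gm_norm hm hs.le).trans (hC s hs)⟩

/-- K -/
noncomputable def K0 (m : ℝ) : ℝ → ℂ := lap (gm m)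
noncomputable def K1 (m : ℝ) : ℝ → ℂ := lap (fun s => (s:ℂ) * gm m s)
noncomputable def K2 (m : ℝ) : ℝ → ℂ := lap (fun s => (s:ℂ) * ((s:ℂ) * gm m s))

lemma K0_d {m : ℝ} (hm : 0 < m) {x : ℝ} (hx : 0 < x) : HasDerivAt (K0 m) (-K1 m x) x := lap_d (gm_sub hm) hx
lemma K1_d {m : ℝ} (hm : 0 < m) {x : ℝ} (hx : 0 < x) : HasDerivAt (K1 m) (-K2 m x) x :=
  lap_d (gm_sub hm).mul_s hx

lemma gm_d {m : ℝ} {s : ℝ} (hs : 0 < s) : HasDerivAt (gm (m+1)) (((m+1:ℝ):ℂ) * (V s + s) * gm m s) s := by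
  have h1 : HasDerivAt (fun s : ℝ => s^(m+1)) ((m+1) * s^m) s := by
    refine (Real.hasDerivAt_rpow_const (Or.inl hs.ne')).congr_deriv ?_
    ring_nf
  refine (h1.ofReal_comp.mul (Vp_d m s)).congr_deriv ?_
  have h2 : V s ^ ((m+1:ℝ):ℂ) = V s ^ (m:ℂ) * V s := by
    push_cast; rw [Complex.cpow_add _ _ (V_ne s), Complex.cpow_one]
  have h3 : s^(m+1) = s^m*s := by rw [Real.rpow_add hs, Real.rpow_one]
  rw [h2, h3]; unfold gm; push_cast; ring

lemma gm_succ {m : ℝ} {s : ℝ} (hs : 0 < s) : gm (m+1) s = V s * s * gm m s := by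
  have h2 : V s ^ ((m+1:ℝ):ℂ) = V s ^ (m:ℂ) * V s := by
    push_cast; rw [Complex.cpow_add _ _ (V_ne s), Complex.cpow_one]
  have h3 : s^(m+1) = s^m*s := by rw [Real.rpow_add hs, Real.rpow_one]
  unfold gm
  rw [h2, h3]; push_cast; ring

lemma K_ode {m : ℝ} (hm : 0 < m) {x : ℝ} (hx : 0 < x) :
    x * (K2 m x - 2 * Complex.I * K1 m x) + 2 * (m+1) * (Complex.I * K0 m x - K1 m x) = 0 := by
  have i0 := (gm_sub hm).int hx
  have i1 := (gm_sub hm).mul_s.int hx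
  have i2 := (gm_sub hm).mul_s.mul_s.int hx
  have J := (((i2.sub (i1.const_mul (2 * Complex.I))).const_mul (x:ℂ)).add
    (((i0.const_mul Complex.I).sub i1).const_mul (2*((m:ℂ)+1)))).neg
  have key := MeasureTheory.integral_Ioi_of_hasDerivAt_of_tendsto (a := 0) (m := (0:ℂ))
    (f := fun s : ℝ => ((rexp (-x * s) : ℝ) : ℂ) * gm (m+1) s) ?_ ?_ J ?_
  · simp only [Pi.add_apply, Pi.sub_apply, Pi.neg_apply] at key
    rw [MeasureTheory.integral_neg, MeasureTheory.integral_add, MeasureTheory.integral_const_mul,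
      MeasureTheory.integral_const_mul, MeasureTheory.integral_sub, MeasureTheory.integral_sub,
      MeasureTheory.integral_const_mul, MeasureTheory.integral_const_mul] at key
    · have e : gm (m+1) 0 = 0 := by
        simp [gm, Real.zero_rpow (by linarith : m+1 ≠ 0)]
      rw [e] at key
      have k2 := neg_eq_iff_eq_neg.1 key
      simp only [mul_zero, sub_zero, neg_zero] at k2
      exact k2
    · exact i0.const_mul Complex.I
    · exact i1
    · exact i2
    · exact i1.const_mul _
    · exact (i2.sub (i1.const_mul (2 * Complex.I))).const_mul (x:ℂ)
    · exact ((i0.const_mul Complex.I).sub i1).const_mul (2*((m:ℂ)+1))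
  · refine ContinuousAt.continuousWithinAt (Continuous.continuousAt ?_)
    exact Continuous.mul (by fun_prop) (gm_cont (by linarith))
  · intro s hs
    have hs : 0 < s := hs
    have h0 : HasDerivAt (fun s : ℝ => rexp (-x*s)) (rexp (-x*s) * (-x)) s := by
      have : HasDerivAt (fun s : ℝ => -x*s) (-x) s := by
        exact ((hasDerivAt_id s).const_mul (-x)).congr_deriv (by simp)
      exact this.exp
    refine (h0.ofReal_comp.mul (gm_d (m := m) hs)).congr_deriv ?_
    simp only [Pi.add_apply, Pi.sub_apply, Pi.neg_apply]
    rw [gm_succ hs]; unfold V; push_cast; ring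
  · obtain ⟨C, hC⟩ := (gm_sub (by linarith : 0 < m+1)).2 (x/2) (by positivity)
    have hl : Tendsto (fun s : ℝ => C * rexp (-(x/2*s))) atTop (𝓝 0) := by
      have : Tendsto (fun s : ℝ => rexp (-(x/2*s))) atTop (𝓝 0) :=
        Real.tendsto_exp_neg_atTop_nhds_zero.comp (tendsto_id.const_mul_atTop (by positivity : 0 < x/2))
      simpa using this.const_mul C
    refine squeeze_zero_norm' ?_ hl
    filter_upwards [eventually_gt_atTop 0] with s hs
    rw [norm_mul, Complex.norm_real, Real.norm_of_nonneg (Real.exp_pos _).le]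
    calc rexp (-x*s) * ‖gm (m+1) s‖ ≤ rexp (-x*s) * (C * rexp (x/2*s)) := by
          gcongr; exact hC s hs
      _ = C * (rexp (-x*s) * rexp (x/2*s)) := by ring
      _ = _ := by rw [← Real.exp_add]; ring_nf

lemma K0_scale {m : ℝ} {x : ℝ} (hx : 0 < x) :
    ((x^(m+1) : ℝ):ℂ) * K0 m x =
      ∫ u in Ioi (0:ℝ), ((rexp (-u) * u^m : ℝ) : ℂ) * V (u/x) ^ (m:ℂ) := by
  have h := MeasureTheory.integral_comp_mul_left_Ioi
    (fun s : ℝ => ((rexp (-x * s) : ℝ) : ℂ) * gm m s) 0 (inv_pos.2 hx)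
  rw [mul_zero, inv_inv] at h
  have h' : (x:ℂ) * K0 m x = ∫ u in Ioi (0:ℝ), ((rexp (-x * (x⁻¹*u)) : ℝ) : ℂ) * gm m (x⁻¹*u) := by
    rw [h, Complex.real_smul]; rfl
  rw [Real.rpow_add hx, Real.rpow_one, Complex.ofReal_mul, mul_assoc, h', ← MeasureTheory.integral_const_mul]
  refine MeasureTheory.setIntegral_congr_fun measurableSet_Ioi (fun u hu => ?_)
  have hu : 0 < u := hu
  have e1 : -x * (x⁻¹*u) = -u := by field_simp
  have e2 : x⁻¹*u = u/x := by field_simp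
  simp only [e1]
  rw [e2]; unfold gm
  have e3 : u^m = x^m * (u/x)^m := by
    rw [← Real.mul_rpow hx.le (by positivity)]; congr 1; field_simp
  rw [e3]; push_cast; ring

lemma gint (m : ℝ) (hm : 0 < m) : MeasureTheory.IntegrableOn (fun u : ℝ => rexp (-u) * (u^m * (u+2)^m)) (Ioi 0) := by
  obtain ⟨C, hC0, hC⟩ := pow_bound hm (by norm_num : (0:ℝ) < 1/2)
  have h1 : MeasureTheory.IntegrableOn (fun s : ℝ => C * rexp (-(1/2) * s)) (Ioi 0) :=
    (exp_neg_integrableOn_Ioi 0 (by norm_num : (0:ℝ) < 1/2)).const_mul C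
  refine MeasureTheory.Integrable.mono' h1 ?_ ?_
  · refine Continuous.aestronglyMeasurable ?_
    have := Real.continuous_rpow_const (q := m) hm.le
    exact (by fun_prop : Continuous fun u : ℝ => rexp (-u)).mul
      (this.mul (this.comp (by fun_prop : Continuous fun u : ℝ => u + 2)))
  · refine (MeasureTheory.ae_restrict_iff' measurableSet_Ioi).2 (Eventually.of_forall fun s hs => ?_)
    have hs : 0 < s := hs
    rw [Real.norm_of_nonneg (by positivity)]
    calc rexp (-s) * (s^m * (s+2)^m) ≤ rexp (-s) * (C * rexp (1/2*s)) := by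
          exact mul_le_mul_of_nonneg_left (hC s hs) (Real.exp_pos _).le
      _ = C * (rexp (-s) * rexp (1/2*s)) := by ring
      _ = _ := by rw [← Real.exp_add]; ring_nf

lemma Gint (m : ℝ) (hm : 0 < m) : 0 < ∫ u in Ioi (0:ℝ), rexp (-u) * u^m := by
  have := Real.Gamma_eq_integral (s := m+1) (by linarith)
  simp only [add_sub_cancel_right] at this
  rw [← this]; exact Real.Gamma_pos_of_pos (by linarith)

/-- amplitude -/
noncomputable def hL (m x : ℝ) : ℂ := ((x^(m+1) : ℝ):ℂ) * K0 m x

lemma hL_top {m : ℝ} (hm : 0 < m) :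
    Tendsto (hL m) atTop (𝓝 (((∫ u in Ioi (0:ℝ), rexp (-u) * u^m : ℝ) : ℂ) * (-2*Complex.I)^(m:ℂ))) := by
  have e : (((∫ u in Ioi (0:ℝ), rexp (-u) * u^m : ℝ) : ℂ) * (-2*Complex.I)^(m:ℂ)) =
      ∫ u in Ioi (0:ℝ), ((rexp (-u) * u^m : ℝ) : ℂ) * (-2*Complex.I)^(m:ℂ) := by
    rw [MeasureTheory.integral_mul_const, integral_complex_ofReal]
  rw [e]
  have key : Tendsto (fun x : ℝ => ∫ u in Ioi (0:ℝ), ((rexp (-u) * u^m : ℝ) : ℂ) * V (u/x) ^ (m:ℂ)) atTop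
      (𝓝 (∫ u in Ioi (0:ℝ), ((rexp (-u) * u^m : ℝ) : ℂ) * (-2*Complex.I)^(m:ℂ))) := by
    refine MeasureTheory.tendsto_integral_filter_of_dominated_convergence
      (fun u : ℝ => rexp (-u) * (u^m * (u+2)^m)) ?_ ?_ (gint m hm) ?_
    · refine Eventually.of_forall fun x => Continuous.aestronglyMeasurable ?_
      have := Real.continuous_rpow_const (q := m) hm.le
      refine Continuous.mul (Complex.continuous_ofReal.comp (Continuous.mul (by fun_prop) this)) ?_
      exact (Vp_cont m).comp (by fun_prop : Continuous fun u : ℝ => u/x)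
    · filter_upwards [eventually_ge_atTop 1] with x hx
      refine (MeasureTheory.ae_restrict_iff' measurableSet_Ioi).2 (Eventually.of_forall fun u hu => ?_)
      have hu : 0 < u := hu
      rw [norm_mul, Complex.norm_real, Real.norm_of_nonneg (by positivity), Complex.norm_cpow_real, mul_assoc]
      gcongr
      refine (V_norm (by positivity)).trans ?_
      have : u/x ≤ u := div_le_self hu.le hx
      linarith
    · refine Eventually.of_forall fun u => Tendsto.const_mul _ ?_
      have h0 : Tendsto (fun x : ℝ => u/x) atTop (𝓝 0) := tendsto_const_nhds.div_atTop tendsto_id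
      have := ((Vp_cont m).tendsto 0).comp h0
      have e2 : V 0 = -2 * Complex.I := by simp [V]
      rw [e2] at this
      exact this
  refine key.congr' ?_
  filter_upwards [eventually_gt_atTop 0] with x hx
  rw [hL, K0_scale hx]

lemma mul_cp {r : ℝ} (hr : 0 < r) {z : ℂ} (hz : z ≠ 0) (m : ℝ) :
    ((r^m : ℝ) : ℂ) * z^(m:ℂ) = ((r:ℂ)*z)^(m:ℂ) := by
  have hr' : (r:ℂ) ≠ 0 := by exact_mod_cast hr.ne'
  rw [Complex.cpow_def_of_ne_zero hz, Complex.cpow_def_of_ne_zero (mul_ne_zero hr' hz),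
    Complex.log_ofReal_mul hr hz, add_mul, Complex.exp_add, Real.rpow_def_of_pos hr]
  push_cast; rfl

lemma hL_zero {m : ℝ} (hm : 0 < m) :
    Tendsto (fun x : ℝ => ((x^m:ℝ):ℂ) * hL m x) (𝓝[>] 0) (𝓝 (((∫ u in Ioi (0:ℝ), rexp (-u) * u^(2*m) : ℝ) : ℂ))) := by
  rw [← integral_complex_ofReal]
  have key : Tendsto (fun x : ℝ => ∫ u in Ioi (0:ℝ), ((rexp (-u) * u^m : ℝ) : ℂ) * (((x^m:ℝ):ℂ) * V (u/x) ^ (m:ℂ))) (𝓝[>] 0)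
      (𝓝 (∫ u in Ioi (0:ℝ), ((rexp (-u) * u^(2*m) : ℝ) : ℂ))) := by
    have ee : ∀ x u : ℝ, 0 < x → ((x^m:ℝ):ℂ) * V (u/x) ^ (m:ℂ) = ((u:ℂ) - 2 * x * Complex.I)^(m:ℂ) := by
      intro x u hx
      rw [mul_cp hx (V_ne _)]
      congr 1
      have hx' : (x:ℂ) ≠ 0 := by exact_mod_cast hx.ne'
      unfold V; push_cast; field_simp
    refine MeasureTheory.tendsto_integral_filter_of_dominated_convergence
      (fun u : ℝ => rexp (-u) * (u^m * (u+2)^m)) ?_ ?_ (gint m hm) ?_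
    · refine Eventually.of_forall fun x => Continuous.aestronglyMeasurable ?_
      have := Real.continuous_rpow_const (q := m) hm.le
      refine Continuous.mul (Complex.continuous_ofReal.comp (Continuous.mul (by fun_prop) this)) ?_
      exact continuous_const.mul ((Vp_cont m).comp (by fun_prop : Continuous fun u : ℝ => u/x))
    · filter_upwards [Ioo_mem_nhdsGT (zero_lt_one)] with x hx
      refine (MeasureTheory.ae_restrict_iff' measurableSet_Ioi).2 (Eventually.of_forall fun u hu => ?_)
      have hu : 0 < u := hu
      rw [ee x u hx.1, norm_mul, Complex.norm_real, Real.norm_of_nonneg (by positivity), Complex.norm_cpow_real, mul_assoc]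
      gcongr
      refine (norm_sub_le _ _).trans ?_
      simp [abs_of_pos hu, abs_of_pos hx.1]
      linarith [hx.2]
    · refine (MeasureTheory.ae_restrict_iff' measurableSet_Ioi).2 (Eventually.of_forall fun u hu => ?_)
      have hu : 0 < u := hu
      have e3 : ((rexp (-u) * u^(2*m) : ℝ) : ℂ) = ((rexp (-u) * u^m : ℝ) : ℂ) * (u:ℂ)^(m:ℂ) := by
        rw [← Complex.ofReal_cpow hu.le, two_mul, Real.rpow_add hu]; push_cast; ring
      rw [e3]
      refine Tendsto.const_mul _ ?_
      have h1 : ContinuousAt (fun x : ℝ => ((u:ℂ) - 2 * x * Complex.I)^(m:ℂ)) 0 := by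
        refine ContinuousAt.cpow (by fun_prop) continuousAt_const ?_
        left; simpa using hu
      have h2 : Tendsto (fun x : ℝ => ((u:ℂ) - 2 * x * Complex.I)^(m:ℂ)) (𝓝[>] 0) (𝓝 ((u:ℂ)^(m:ℂ))) := by
        have := h1.tendsto.mono_left (nhdsWithin_le_nhds (s := Ioi 0))
        simpa using this
      refine h2.congr' ?_
      filter_upwards [self_mem_nhdsWithin] with x hx
      exact (ee x u hx).symm
  refine key.congr' ?_
  filter_upwards [self_mem_nhdsWithin] with x hx
  rw [hL, K0_scale hx, ← MeasureTheory.integral_const_mul]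
  refine MeasureTheory.integral_congr_ae (Eventually.of_forall fun u => ?_)
  simp only
  ring

/-- Hankel type solution -/
noncomputable def hh (m x : ℝ) : ℂ := Complex.exp (Complex.I * x) * hL m x
noncomputable def hD (m x : ℝ) : ℂ :=
  Complex.exp (Complex.I * x) * ((x^(m+1) : ℝ):ℂ) * ((((m:ℂ)+1)/x + Complex.I) * K0 m x - K1 m x)

lemma ex_d (x : ℝ) : HasDerivAt (fun x : ℝ => Complex.exp (Complex.I * x)) (Complex.exp (Complex.I * x) * Complex.I) x := by
  have : HasDerivAt (fun z : ℂ => Complex.exp (Complex.I * z)) (Complex.exp (Complex.I * x) * Complex.I) (x:ℂ) := by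
    have h := ((hasDerivAt_id (x:ℂ)).const_mul Complex.I).cexp
    exact h.congr_deriv (by simp)
  exact this.comp_ofReal

lemma pw_d {m x : ℝ} (hx : 0 < x) : HasDerivAt (fun x : ℝ => ((x^(m+1):ℝ):ℂ)) (((x^(m+1):ℝ):ℂ) * (((m:ℂ)+1)/x)) x := by
  have h1 : HasDerivAt (fun s : ℝ => s^(m+1)) ((m+1) * x^m) x := by
    refine (Real.hasDerivAt_rpow_const (Or.inl hx.ne')).congr_deriv ?_
    ring_nf
  refine h1.ofReal_comp.congr_deriv ?_
  have hx' : (x:ℂ) ≠ 0 := by exact_mod_cast hx.ne'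
  rw [Real.rpow_add hx, Real.rpow_one]; push_cast; field_simp

lemma hh_d {m x : ℝ} (hm : 0 < m) (hx : 0 < x) : HasDerivAt (hh m) (hD m x) x := by
  refine ((ex_d x).mul ((pw_d (m := m) hx).mul (K0_d hm hx))).congr_deriv ?_
  unfold hD
  simp only [Pi.mul_apply]
  ring

lemma inv_d {x : ℝ} (m : ℝ) (hx : 0 < x) : HasDerivAt (fun x : ℝ => (((m:ℂ)+1)/(x:ℂ) + Complex.I)) (-((m:ℂ)+1)/(x:ℂ)^2) x := by
  have hx' : (x:ℂ) ≠ 0 := by exact_mod_cast hx.ne'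
  have h := (((hasDerivAt_inv hx').const_mul ((m:ℂ)+1)).add_const Complex.I).comp_ofReal
  refine (h.congr_deriv ?_).congr_of_eventuallyEq ?_
  · field_simp
  · exact Eventually.of_forall fun y => by simp [div_eq_mul_inv]

lemma hD_d {m x : ℝ} (hm : 0 < m) (hx : 0 < x) :
    HasDerivAt (hD m) (-((bq (m+1/2) x : ℝ):ℂ) * hh m x) x := by
  refine (((ex_d x).mul (pw_d (m := m) hx)).mul
    (((inv_d m hx).mul (K0_d hm hx)).sub (K1_d hm hx))).congr_deriv ?_
  have hx' : (x:ℂ) ≠ 0 := by exact_mod_cast hx.ne'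
  have o := K_ode hm hx
  have o2 : K2 m x = 2 * Complex.I * K1 m x - 2 * (m+1) * (Complex.I * K0 m x - K1 m x) / x := by
    field_simp; linear_combination o
  unfold hh hL bq
  simp only [Pi.mul_apply, Pi.sub_apply]
  rw [o2]
  push_cast
  field_simp
  ring_nf
  simp only [Complex.I_sq]
  ring

lemma const_of_d {f : ℝ → ℂ} (h : ∀ x, 0 < x → HasDerivAt f 0 x) {x y : ℝ} (hx : 0 < x) (hy : 0 < y) : f x = f y := by
  have aux : ∀ a b : ℝ, 0 < a → a ≤ b → f b = f a := by
    intro a b ha hab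
    refine constant_of_has_deriv_right_zero (a := a) (b := b) ?_ ?_ b ⟨hab, le_rfl⟩
    · intro z hz; exact (h z (by linarith [hz.1])).continuousAt.continuousWithinAt
    · intro z hz; exact (h z (by linarith [hz.1])).hasDerivWithinAt
  rcases le_total x y with hxy | hxy
  · exact (aux x y hx hxy).symm
  · exact aux y x hy hxy

/-- Wronskians -/
noncomputable def wr (m x : ℝ) : ℂ := (bU (m+1/2) x : ℂ) * hD m x - (bD (m+1/2) x : ℂ) * hh m x
noncomputable def wc (m x : ℝ) : ℂ := hh m x * star (hD m x) - hD m x * star (hh m x)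

lemma wr_d {m x : ℝ} (hm : 0 < m) (hx : 0 < x) : HasDerivAt (wr m) 0 x := by
  have hν : 0 ≤ m + 1/2 := by linarith
  refine (((bU_d hν hx).ofReal_comp.mul (hD_d hm hx)).sub
    ((bD_d hν hx).ofReal_comp.mul (hh_d hm hx))).congr_deriv ?_
  push_cast; ring

lemma wc_d {m x : ℝ} (hm : 0 < m) (hx : 0 < x) : HasDerivAt (wc m) 0 x := by
  refine (((hh_d hm hx).mul (hD_d hm hx).star).sub
    ((hD_d hm hx).mul (hh_d hm hx).star)).congr_deriv ?_
  simp only [Complex.star_def, map_mul, map_neg, Complex.conj_ofReal]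
  ring

lemma wr_id (m x : ℝ) : (bU (m+1/2) x : ℂ) * wc m x = hh m x * star (wr m x) - star (hh m x) * wr m x := by
  unfold wr wc
  simp only [Complex.star_def, map_mul, map_sub, Complex.conj_ofReal]
  ring

lemma hh_zero {m : ℝ} (hm : 0 < m) :
    Tendsto (fun x : ℝ => ((x^m:ℝ):ℂ) * hh m x) (𝓝[>] 0) (𝓝 (((∫ u in Ioi (0:ℝ), rexp (-u) * u^(2*m) : ℝ) : ℂ))) := by
  have h1 : Tendsto (fun x : ℝ => Complex.exp (Complex.I * x)) (𝓝[>] 0) (𝓝 1) := by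
    have : Continuous (fun x : ℝ => Complex.exp (Complex.I * x)) := by fun_prop
    have := (this.tendsto 0).mono_left (nhdsWithin_le_nhds (s := Ioi 0))
    simpa using this
  have := h1.mul (hL_zero hm)
  rw [one_mul] at this
  refine this.congr fun x => ?_
  unfold hh; ring

lemma wr_real {m : ℝ} (hm : 0 < m) : star (wr m 1) = wr m 1 := by
  set G : ℝ := ∫ u in Ioi (0:ℝ), rexp (-u) * u^(2*m) with hG
  have hG0 : 0 < G := Gint (2*m) (by linarith)
  have h1 := hh_zero hm
  rw [← hG] at h1
  have h2 : Tendsto (fun x : ℝ => ((x^m:ℝ):ℂ) * star (hh m x)) (𝓝[>] 0) (𝓝 (G:ℂ)) := by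
    have := (continuous_star.tendsto (G:ℂ)).comp h1
    simp only [Complex.star_def, Complex.conj_ofReal] at this
    refine this.congr fun x => ?_
    simp only [Function.comp, map_mul, Complex.conj_ofReal, Complex.star_def]
  have h3 : Tendsto (fun x : ℝ => ((x^m:ℝ):ℂ) * ((bU (m+1/2) x : ℂ) * wc m 1)) (𝓝[>] 0) (𝓝 0) := by
    have a1 : Tendsto (fun x : ℝ => ((x^m:ℝ):ℂ)) (𝓝[>] 0) (𝓝 ((0:ℝ):ℂ)) := by
      have := (Real.continuous_rpow_const (q := m) hm.le).tendsto 0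
      rw [Real.zero_rpow hm.ne'] at this
      exact (Complex.continuous_ofReal.tendsto 0).comp (this.mono_left nhdsWithin_le_nhds)
    have a2 : Tendsto (fun x : ℝ => (bU (m+1/2) x : ℂ)) (𝓝[>] 0) (𝓝 ((0:ℝ):ℂ)) :=
      (Complex.continuous_ofReal.tendsto 0).comp (bU_tendsto (by linarith))
    have := a1.mul (a2.mul_const (wc m 1))
    simpa using this
  have h4 := (h1.mul_const (star (wr m 1))).sub (h2.mul_const (wr m 1))
  have h5 : Tendsto (fun x : ℝ => ((x^m:ℝ):ℂ) * ((bU (m+1/2) x : ℂ) * wc m 1)) (𝓝[>] 0)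
      (𝓝 ((G:ℂ) * star (wr m 1) - G * wr m 1)) := by
    refine h4.congr' ?_
    filter_upwards [self_mem_nhdsWithin] with x hx
    have hx : 0 < x := hx
    have e := wr_id m x
    rw [const_of_d (fun y hy => wr_d hm hy) hx one_pos, const_of_d (fun y hy => wc_d hm hy) hx one_pos] at e
    rw [e]; ring
  have h6 := tendsto_nhds_unique h5 h3
  rw [← mul_sub] at h6
  rcases mul_eq_zero.1 h6 with h | h
  · exact absurd (by exact_mod_cast h) hG0.ne'
  · exact sub_eq_zero.1 h

lemma m2I (m : ℝ) : (-2*Complex.I)^(m:ℂ) = (((2:ℝ)^m : ℝ):ℂ) * Complex.exp (-(m * (π/2) : ℝ) * Complex.I) := by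
  have e : (-2*Complex.I) = ((2:ℝ):ℂ) * (-Complex.I) := by push_cast; ring
  rw [e, ← mul_cp two_pos (by simp), Complex.cpow_def_of_ne_zero (by simp), Complex.log_neg_I]
  congr 2; push_cast; ring

lemma phase_mod {m : ℝ} (hm : 0 < m) {a : ℕ → ℝ} (ha : IsZ (m+1/2) a) {M : ℝ}
    (hM : Tendsto (fun n : ℕ => a n - (n+1)*π) atTop (𝓝 M)) : ∃ k : ℤ, M = m*(π/2) + k*π := by
  have hν : 1/2 ≤ m+1/2 := by linarith
  set A : ℝ := ∫ u in Ioi (0:ℝ), rexp (-u) * u^m with hA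
  have hA0 : 0 < A := Gint m hm
  have hl := (hL_top hm).comp (Z_atTop hν ha)
  rw [← hA, m2I] at hl
  set L : ℂ := (A:ℂ) * ((((2:ℝ)^m : ℝ):ℂ) * Complex.exp (-(m * (π/2) : ℝ) * Complex.I)) with hL'
  have hL0 : L ≠ 0 := by
    refine mul_ne_zero (by exact_mod_cast hA0.ne') (mul_ne_zero ?_ (Complex.exp_ne_zero _))
    exact_mod_cast (by positivity : (0:ℝ) < 2^m).ne'
  have hne : ∀ᶠ n in atTop, hL m (a n) ≠ 0 := hl.eventually_ne hL0
  have him : ∀ᶠ n : ℕ in atTop, (Complex.exp (Complex.I * ((a n - (n+1)*π : ℝ):ℂ)) * hL m (a n)).im = 0 := by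
    filter_upwards [hne] with n hn
    have hp := ha.pos n
    have hz := ha.zero n
    have hd := bD_ne hν hp hz
    have e := wr_id m (a n)
    have ew : wr m (a n) = wr m 1 := const_of_d (fun y hy => wr_d hm hy) hp one_pos
    have ew2 : wr m 1 ≠ 0 := by
      rw [← ew, wr, hz]
      simp only [Complex.ofReal_zero, zero_mul, zero_sub, ne_eq, neg_eq_zero, mul_eq_zero, not_or]
      exact ⟨by exact_mod_cast hd, by unfold hh; exact mul_ne_zero (Complex.exp_ne_zero _) hn⟩
    rw [ew, wr_real hm, hz, ← sub_mul] at e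
    simp only [Complex.ofReal_zero, zero_mul] at e
    have e2 : hh m (a n) - star (hh m (a n)) = 0 := by
      rcases mul_eq_zero.1 e.symm with h | h
      · exact h
      · exact absurd h ew2
    have e3 : (hh m (a n)).im = 0 := Complex.conj_eq_iff_im.1 (sub_eq_zero.1 e2).symm
    have e4 : Complex.exp (Complex.I * ((a n - (n+1)*π : ℝ):ℂ)) = ((((-1)^(n+1) : ℝ)):ℂ) * Complex.exp (Complex.I * a n) := by
      have : Complex.I * ((a n - (n+1)*π : ℝ):ℂ) = ((n+1:ℕ):ℂ) * (-(π * Complex.I)) + Complex.I * a n := by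
        push_cast; ring
      rw [this, Complex.exp_add, Complex.exp_nat_mul, Complex.exp_neg, Complex.exp_pi_mul_I]
      norm_num
    rw [e4, mul_assoc, Complex.im_ofReal_mul]
    rw [show Complex.exp (Complex.I * a n) * hL m (a n) = hh m (a n) from rfl, e3, mul_zero]
  have ht : Tendsto (fun n : ℕ => (Complex.exp (Complex.I * ((a n - (n+1)*π : ℝ):ℂ)) * hL m (a n)).im) atTop
      (𝓝 (Complex.exp (Complex.I * (M:ℂ)) * L).im) := by
    have c1 : Continuous (fun x : ℝ => Complex.exp (Complex.I * x)) := by fun_prop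
    exact (Complex.continuous_im.tendsto _).comp (((c1.tendsto M).comp hM).mul hl)
  have h0 : (Complex.exp (Complex.I * (M:ℂ)) * L).im = 0 := by
    refine tendsto_nhds_unique ht (tendsto_const_nhds.congr' ?_)
    filter_upwards [him] with n hn using hn.symm
  have h1 : Complex.exp (Complex.I * (M:ℂ)) * L = ((A * 2^m : ℝ):ℂ) * Complex.exp ((M - m*(π/2) : ℝ) * Complex.I) := by
    have : ((M - m*(π/2) : ℝ):ℂ) * Complex.I = Complex.I * M + (-(m * (π/2) : ℝ) * Complex.I) := by push_cast; ring
    rw [this, Complex.exp_add, hL']; push_cast; ring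
  rw [h1, Complex.im_ofReal_mul, Complex.exp_ofReal_mul_I_im] at h0
  have h2 : sin (M - m*(π/2)) = 0 := by
    rcases mul_eq_zero.1 h0 with h | h
    · exact absurd h (by positivity)
    · exact h
  obtain ⟨k, hk⟩ := Real.sin_eq_zero_iff.1 h2
  exact ⟨k, by linarith⟩

lemma half_zero : IsZ (1/2) (fun n : ℕ => ((n:ℝ)+1)*π) := by
  have h0 : (0:ℝ) ≤ 1/2 := by norm_num
  have hd : ∀ x : ℝ, 0 < x → HasDerivAt (fun x : ℝ => ((bU (1/2) x * cos x - bD (1/2) x * sin x : ℝ) : ℂ)) 0 x := by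
    intro x hx
    refine ((((bU_d h0 hx).mul (Real.hasDerivAt_cos x)).sub ((bD_d h0 hx).mul (Real.hasDerivAt_sin x))).ofReal_comp).congr_deriv ?_
    have : bq (1/2) x = 1 := by unfold bq; norm_num
    rw [this]; push_cast; ring
  have hlim : Tendsto (fun x : ℝ => bU (1/2) x * cos x - bD (1/2) x * sin x) (𝓝[>] 0) (𝓝 0) := by
    have b0 : Tendsto (bU (1/2)) (𝓝[>] 0) (𝓝 0) := bU_tendsto (by norm_num)
    have b1 : Tendsto (bU (1/2+1)) (𝓝[>] 0) (𝓝 0) := bU_tendsto (by norm_num)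
    have hb : Tendsto (fun x : ℝ => 2 * |bU (1/2) x| + |bU (1/2+1) x|) (𝓝[>] 0) (𝓝 0) := by
      have := (b0.abs.const_mul 2).add b1.abs
      simpa using this
    refine squeeze_zero_norm' ?_ hb
    filter_upwards [self_mem_nhdsWithin] with x hx
    have hx : 0 < x := hx
    have hs : |sin x| ≤ |x| := Real.abs_sin_le_abs
    have hs1 : |sin x / x| ≤ 1 := by
      rw [abs_div]; exact div_le_one_of_le₀ hs (abs_nonneg _)
    have e : bU (1/2) x * cos x - bD (1/2) x * sin x
        = bU (1/2) x * cos x - bU (1/2) x * (sin x/x) + bU (1/2+1) x * sin x := by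
      unfold bD; field_simp; ring
    rw [e, Real.norm_eq_abs]
    have q1 : |bU (1/2) x * cos x| ≤ |bU (1/2) x| := by
      rw [abs_mul]; exact mul_le_of_le_one_right (abs_nonneg _) (abs_cos_le_one x)
    have q2 : |bU (1/2) x * (sin x/x)| ≤ |bU (1/2) x| := by
      rw [abs_mul]; exact mul_le_of_le_one_right (abs_nonneg _) hs1
    have q3 : |bU (1/2+1) x * sin x| ≤ |bU (1/2+1) x| := by
      rw [abs_mul]; exact mul_le_of_le_one_right (abs_nonneg _) (abs_sin_le_one x)
    have t1 := abs_add_le (bU (1/2) x * cos x - bU (1/2) x * (sin x/x)) (bU (1/2+1) x * sin x)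
    have t2 := abs_sub (bU (1/2) x * cos x) (bU (1/2) x * (sin x/x))
    linarith
  have hz : ∀ x : ℝ, 0 < x → bU (1/2) x * cos x = bD (1/2) x * sin x := by
    intro x hx
    have : Tendsto (fun x : ℝ => bU (1/2) x * cos x - bD (1/2) x * sin x) (𝓝[>] 0)
        (𝓝 (bU (1/2) x * cos x - bD (1/2) x * sin x)) := by
      refine tendsto_const_nhds.congr' ?_
      filter_upwards [self_mem_nhdsWithin] with y hy
      exact_mod_cast const_of_d hd hx hy
    linarith [tendsto_nhds_unique this hlim]
  refine ⟨?_, fun n => by positivity, fun n => ?_, fun t ht h => ?_⟩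
  · intro i j hij
    have : (i:ℝ) < j := by exact_mod_cast hij
    have := Real.pi_pos
    show ((i:ℝ)+1)*π < (j+1)*π
    nlinarith
  · have h1 := hz (((n:ℝ)+1)*π) (by positivity)
    have hs : sin (((n:ℝ)+1)*π) = 0 := by exact_mod_cast Real.sin_nat_mul_pi (n+1)
    rw [hs, mul_zero] at h1
    rcases mul_eq_zero.1 h1 with h | h
    · exact h
    · have := Real.sin_sq_add_cos_sq (((n:ℝ)+1)*π)
      rw [hs, h] at this; norm_num at this
  · have h1 := hz t ht
    rw [h, zero_mul] at h1
    have hs : sin t = 0 := by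
      rcases mul_eq_zero.1 h1.symm with h' | h'
      · exact absurd h' (bD_ne le_rfl ht h)
      · exact h'
    obtain ⟨k, hk⟩ := Real.sin_eq_zero_iff.1 hs
    have hk0 : 0 < k := by
      have : 0 < (k:ℝ) := by
        by_contra hc; push Not at hc
        nlinarith [Real.pi_pos]
      exact_mod_cast this
    refine ⟨(k-1).toNat, ?_⟩
    have : (((k-1).toNat : ℕ):ℝ) = (k:ℝ) - 1 := by
      have := Int.toNat_of_nonneg (by omega : 0 ≤ k-1)
      have h2 : (((k-1).toNat : ℤ):ℝ) = ((k-1:ℤ):ℝ) := by rw [this]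
      push_cast at h2; exact h2
    show (((k-1).toNat : ℕ) + 1 : ℝ) * π = t
    rw [this, ← hk]; ring

/-- limit predicate -/
def LimZ (ν M : ℝ) : Prop := ∀ a : ℕ → ℝ, IsZ ν a → Tendsto (fun n : ℕ => a n - (n+1)*π) atTop (𝓝 M)

lemma IsZ.uniq {ν : ℝ} {a b : ℕ → ℝ} (ha : IsZ ν a) (hb : IsZ ν b) : a = b := by
  refine (StrictMono.range_inj ha.mono hb.mono).1 ?_
  ext t; constructor
  · rintro ⟨n, rfl⟩; exact hb.surj _ (ha.pos n) (ha.zero n)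
  · rintro ⟨n, rfl⟩; exact ha.surj _ (hb.pos n) (hb.zero n)

lemma lim_step {ν μ M N : ℝ} (hν : 1/2 ≤ ν) (h : ν < μ) (hM : LimZ ν M) (hN : LimZ μ N) : M ≤ N := by
  obtain ⟨a, ha⟩ := exists_Z hν
  obtain ⟨b, hb⟩ := exists_Z (by linarith : 1/2 ≤ μ)
  refine le_of_tendsto_of_tendsto (hM a ha) (hN b hb) (Eventually.of_forall fun n => ?_)
  have := Z_lt hν h ha hb n
  simp only; linarith

lemma lim_step' {ν M N : ℝ} (hν : 1/2 ≤ ν) (hM : LimZ ν M) (hN : LimZ (ν+1) N) : N ≤ M + π := by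
  obtain ⟨a, ha⟩ := exists_Z hν
  obtain ⟨b, hb⟩ := exists_Z (by linarith : 1/2 ≤ ν+1)
  have h1 := ((tendsto_add_atTop_iff_nat 1).2 (hM a ha)).add_const π
  refine le_of_tendsto_of_tendsto (hN b hb) h1 (Eventually.of_forall fun n => ?_)
  have := Z_lt' (by linarith) ha hb n
  push_cast; linarith

lemma lim_ex {m : ℝ} (hm : 0 < m) : ∃ k : ℤ, LimZ (m+1/2) (m*(π/2) + k*π) := by
  have hν : 1/2 ≤ m+1/2 := by linarith
  obtain ⟨a, ha⟩ := exists_Z hν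
  obtain ⟨M, hM⟩ := Z_lim hν ha
  obtain ⟨k, hk⟩ := phase_mod hm ha hM
  refine ⟨k, fun b hb => ?_⟩
  rw [hb.uniq ha, ← hk]; exact hM


lemma lim_half (n : ℕ) : LimZ (n+1/2) (n*(π/2)) := by
  induction n with
  | zero =>
    intro a ha
    have := ha.uniq (b := fun n : ℕ => ((n:ℝ)+1)*π) (by simpa using half_zero)
    subst this
    simp
  | succ n ih =>
    obtain ⟨k, hk⟩ := lim_ex (m := ((n+1:ℕ):ℝ)) (by positivity)
    have h0 : (1:ℝ)/2 ≤ n+1/2 := by have : (0:ℝ) ≤ n := n.cast_nonneg; linarith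
    have e : (((n+1:ℕ):ℝ)+1/2) = (n+1/2:ℝ)+1 := by push_cast; ring
    have h1 := lim_step h0 (by rw [e]; linarith) ih hk
    have h2 := lim_step' h0 ih (by rw [← e]; exact hk)
    have hp := Real.pi_pos
    have hk0 : k = 0 := by
      push_cast at h1 h2
      have a1 : -1 < (k:ℝ) := by nlinarith
      have a2 : (k:ℝ) < 1 := by nlinarith
      have b1 : (-1:ℤ) < k := by exact_mod_cast a1
      have b2 : k < 1 := by exact_mod_cast a2
      omega
    rw [hk0] at hk; simpa using hk

lemma lim_all {m : ℝ} (hm : 0 < m) : LimZ (m+1/2) (m*(π/2)) := by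
  obtain ⟨k, hk⟩ := lim_ex hm
  set n := ⌊m⌋₊ with hn
  have n1 : (n:ℝ) ≤ m := Nat.floor_le hm.le
  have n2 : m < n + 1 := Nat.lt_floor_add_one m
  have h0 : (1:ℝ)/2 ≤ n+1/2 := by have : (0:ℝ) ≤ n := n.cast_nonneg; linarith
  rcases n1.eq_or_lt with h | h
  · rw [← h]; exact lim_half n
  have i1 := lim_step h0 (by linarith) (lim_half n) hk
  have i2 := lim_step (by linarith) (by push_cast; linarith) hk (lim_half (n+1))
  have hp := Real.pi_pos
  have hk0 : k = 0 := by
    push_cast at i1 i2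
    have a1 : -1 < (k:ℝ) := by nlinarith
    have a2 : (k:ℝ) < 1 := by nlinarith
    have b1 : (-1:ℤ) < k := by exact_mod_cast a1
    have b2 : k < 1 := by exact_mod_cast a2
    omega
  rw [hk0] at hk; simpa using hk

lemma ph_lim {ν : ℝ} (hν : 1/2 < ν) {a : ℕ → ℝ} (ha : IsZ ν a) :
    Tendsto (fun n : ℕ => bPh ν (a n) - (n+1)*π) atTop (𝓝 (-(π/4))) := by
  have h1 := lim_all (m := ν-1/2) (by linarith) a (by simpa using ha)
  have h2 := (bPh_lim (by linarith : 0 < ν)).comp (Z_atTop hν.le ha)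
  have := h1.sub h2
  have e : (ν-1/2)*(π/2) - ν*(π/2) = -(π/4) := by ring
  rw [e] at this
  refine this.congr fun n => ?_
  simp only [Function.comp]; ring

lemma ph_lo {ν : ℝ} (hν : 1/2 < ν) {a : ℕ → ℝ} (ha : IsZ ν a) (n : ℕ) :
    ((n:ℝ)+1)*π - π/4 ≤ bPh ν (a n) := by
  have := (Z_anti hν.le ha).le_of_tendsto (ph_lim hν ha) n
  linarith

lemma S_lo {ν : ℝ} (hν : 1/2 < ν) {a : ℕ → ℝ} (ha : IsZ ν a) (n : ℕ) :
    4*((n:ℝ)+1)^2 ≤ a n ^2 - ν^2 := by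
  have h1 := ph_lo hν ha n
  have hg := zero_gt hν.le (ha.pos n) (ha.zero n)
  have h2 : 0 ≤ ν * arccos (ν/a n) := mul_nonneg (by linarith) (arccos_nonneg _)
  have hn : (0:ℝ) ≤ n := n.cast_nonneg
  have h3 : 2*((n:ℝ)+1) ≤ √(a n^2-ν^2) := by
    unfold bPh at h1
    nlinarith [Real.pi_gt_three]
  have h4 := (Real.le_sqrt' (by positivity : 0 < 2*((n:ℝ)+1))).1 h3
  nlinarith

set_option maxHeartbeats 1000000 in
lemma ph_hi {x : ℝ} (hx : 0 < x) {k : ℕ} (hk : 1/2 < x*(k+1)) {a : ℕ → ℝ} (ha : IsZ (x*(k+1)) a) :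
    bPh (x*(k+1)) (a k) ≤ ((k:ℝ)+1)*π - π/4 + 2*π*(1+5*x^2/4)^2/(k+1) := by
  set ν := x*((k:ℝ)+1) with hν
  set B := (1+5*x^2/4)^2 with hB
  have hB1 : 1 ≤ B := by rw [hB]; nlinarith [sq_nonneg x, sq_nonneg (5*x^2/4)]
  have hp := Real.pi_pos
  have step : ∀ i : ℕ, k ≤ i → π - π*B/((i:ℝ)+1)^2 ≤ bPh ν (a (i+1)) - bPh ν (a i) := by
    intro i hi
    have hi' : (k:ℝ) ≤ i := by exact_mod_cast hi
    have hi0 : (0:ℝ) < (i:ℝ)+1 := by positivity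
    have hω : 0 < 1 + B/((i:ℝ)+1)^2 := by positivity
    have hg := zero_gt hk.le (ha.pos i) (ha.zero i)
    have key := gap_gt (ν := ν) (a := a i) (b := a (i+1)) (ω := 1 + B/((i:ℝ)+1)^2) (by linarith) hg
      (ha.mono (Nat.lt_succ_self i)) hω (ha.zero i) (ha.zero (i+1)) (ha.between i) ?_
    · have h5 : (1 + B/((i:ℝ)+1)^2) * (π - π*B/((i:ℝ)+1)^2) ≤ π := by
        have : (1 + B/((i:ℝ)+1)^2) * (π - π*B/((i:ℝ)+1)^2) = π - π*(B/((i:ℝ)+1)^2)^2 := by ring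
        rw [this]; nlinarith [sq_nonneg (B/((i:ℝ)+1)^2)]
      nlinarith
    · intro t ht
      have hS := S_lo hk ha i
      have ht0 : 0 < a i := ha.pos i
      have hS2 : 4*((i:ℝ)+1)^2 ≤ t^2-ν^2 := by nlinarith [ht.1]
      have hq := bQ_sub (1 + B/((i:ℝ)+1)^2) (by linarith : 0 < ν) (by linarith [ht.1] : ν < t)
      set S := t^2-ν^2 with hSd
      have hS0 : 0 < S := by nlinarith
      have hν2 : ν^2 ≤ x^2/4*S := by
        have : ν^2 ≤ x^2 * ((i:ℝ)+1)^2 := by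
          rw [hν, mul_pow]; gcongr
        nlinarith [sq_nonneg x]
      have ht2 : t^2 = S + ν^2 := by rw [hSd]; ring
      have htp : 0 < t^2 := by nlinarith [sq_nonneg ν]
      have b1 : t^2 ≤ (1+5*x^2/4)*S := by nlinarith [mul_nonneg (sq_nonneg x) hS0.le]
      have b2 : t^2+4*ν^2 ≤ (1+5*x^2/4)*S := by nlinarith [mul_nonneg (sq_nonneg x) hS0.le]
      have b3 : t^2*(t^2+4*ν^2) ≤ B*S^2 := by
        calc t^2*(t^2+4*ν^2) ≤ ((1+5*x^2/4)*S)*((1+5*x^2/4)*S) := by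
              apply mul_le_mul b1 b2 (by positivity) (by positivity)
          _ = _ := by rw [hB]; ring
      have b4 : (t^2+4*ν^2)/(4*S^2) < ((1 + B/((i:ℝ)+1)^2)^2-1)*(S/t^2) := by
        have c1 : (t^2+4*ν^2)/(4*S^2) ≤ B/(4*t^2) := by
          rw [div_le_div_iff₀ (by positivity) (by positivity)]; linarith [b3]
        have c2 : B/((i:ℝ)+1)^2 ≤ ((1 + B/((i:ℝ)+1)^2)^2-1) := by
          have : 0 < B/((i:ℝ)+1)^2 := by positivity
          generalize B/((i:ℝ)+1)^2 = w at this
          nlinarith [sq_nonneg w]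
        have c3 : B/((i:ℝ)+1)^2 * (4*((i:ℝ)+1)^2/t^2) ≤ ((1 + B/((i:ℝ)+1)^2)^2-1)*(S/t^2) := by
          apply mul_le_mul c2 _ (by positivity) (le_trans (by positivity) c2)
          gcongr
        have c4 : B/((i:ℝ)+1)^2 * (4*((i:ℝ)+1)^2/t^2) = 4*B/t^2 := by field_simp
        have c5 : B/(4*t^2) < 4*B/t^2 := by
          rw [div_lt_div_iff₀ (by positivity) htp]; linarith [mul_pos (by linarith : 0 < B) htp]
        linarith
      linarith
  let c : ℕ → ℝ := fun i => bPh ν (a (i+k)) - (((i+k:ℕ):ℝ)+1)*π - π*B*(2/(((i+k:ℕ):ℝ)+1))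
  have hc : Monotone c := by
    refine monotone_nat_of_le_succ fun i => ?_
    have s := step (i+k) (Nat.le_add_left _ _)
    have e : i+1+k = i+k+1 := by ring
    simp only [c, e]
    set j : ℕ := i+k
    push_cast
    have hj : (0:ℝ) ≤ j := j.cast_nonneg
    have hh : 1/((j:ℝ)+1)^2 ≤ 2/((j:ℝ)+1) - 2/((j:ℝ)+1+1) := by
      have : 2/((j:ℝ)+1) - 2/((j:ℝ)+1+1) = 2/(((j:ℝ)+1)*((j:ℝ)+1+1)) := by field_simp; ring
      rw [this, div_le_div_iff₀ (by positivity) (by positivity)]; nlinarith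
    have h6 : π*B*(1/((j:ℝ)+1)^2) ≤ π*B*(2/((j:ℝ)+1) - 2/((j:ℝ)+1+1)) :=
      mul_le_mul_of_nonneg_left hh (by positivity)
    have h7 : π*B*(1/((j:ℝ)+1)^2) = π*B/((j:ℝ)+1)^2 := by ring
    linarith
  have hl : Tendsto c atTop (𝓝 (-(π/4) - π*B*0)) := by
    have h1 := (tendsto_add_atTop_iff_nat k).2 (ph_lim hk ha)
    have h2 : Tendsto (fun i : ℕ => 2/(((i+k:ℕ):ℝ)+1)) atTop (𝓝 0) := by
      refine (tendsto_add_atTop_iff_nat (f := fun n : ℕ => 2/((n:ℝ)+1)) k).2 ?_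
      exact tendsto_const_nhds.div_atTop (tendsto_atTop_add_const_right _ _ tendsto_natCast_atTop_atTop)
    exact h1.sub (h2.const_mul (π*B))
  have := hc.ge_of_tendsto hl 0
  simp only [c, Nat.zero_add] at this
  have e : π*B*(2/((k:ℝ)+1)) = 2*π*B/(k+1) := by ring
  rw [e] at this
  linarith

lemma kth_eq {ν : ℝ} {k : ℕ} {j : ℝ} {a : ℕ → ℝ} (ha : IsZ ν a) (h : IsKthBesselZero ν k j) : j = a (k-1) := by
  obtain ⟨h1, h2, h3⟩ := h
  obtain ⟨i, hi⟩ := ha.surj j h1 ((bU_zero_iff h1).1 h2)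
  have e : {t : ℝ | t ∈ Set.Ioo 0 j ∧ besselJ ν t = 0} = a '' (↑(Finset.range i)) := by
    ext t; constructor
    · rintro ⟨ht, hz⟩
      obtain ⟨l, hl⟩ := ha.surj t ht.1 ((bU_zero_iff ht.1).1 hz)
      refine ⟨l, ?_, hl⟩
      simp only [Finset.coe_range, mem_Iio]
      apply ha.mono.lt_iff_lt.1
      rw [hl, hi]; exact ht.2
    · rintro ⟨l, hl, rfl⟩
      simp only [Finset.coe_range, mem_Iio] at hl
      refine ⟨⟨ha.pos l, ?_⟩, (bU_zero_iff (ha.pos l)).2 (ha.zero l)⟩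
      rw [← hi]; exact ha.mono hl
  rw [e, ha.mono.injective.encard_image, Set.encard_coe_eq_coe_finsetCard, Finset.card_range] at h3
  have : i = k-1 := by exact_mod_cast h3
  rw [← hi, this]

lemma ph_slope {ν j T c : ℝ} (hν : 0 < ν) (hj : ν < j) (hjT : j ≤ T)
    (h : ∀ t ∈ Icc j T, c ≤ √(t^2-ν^2)/t) : c*(T-j) ≤ bPh ν T - bPh ν j := by
  have := mono_of_deriv (s := Icc j T) (f := fun t => bPh ν t - c*t) (f' := fun t => √(t^2-ν^2)/t - c)
    (convex_Icc j T) (fun t ht => ((bPh_d hν (by linarith [ht.1])).sub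
      ((hasDerivAt_id t).const_mul c)).congr_deriv (by simp)) (fun t ht => by linarith [h t ht])
  have := this (left_mem_Icc.2 hjT) (right_mem_Icc.2 hjT) hjT
  simp only at this; linarith

lemma ph_slope1 {ν j T : ℝ} (hν : 0 < ν) (hj : ν < j) (hjT : j ≤ T) : bPh ν T - bPh ν j ≤ T - j := by
  have := mono_of_deriv (s := Icc j T) (f := fun t => t - bPh ν t) (f' := fun t => 1 - √(t^2-ν^2)/t)
    (convex_Icc j T) (fun t ht => ((hasDerivAt_id t).sub (bPh_d hν (by linarith [ht.1])))) (fun t ht => by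
      have ht0 : 0 < t := by linarith [ht.1]
      have : √(t^2-ν^2)/t ≤ 1 := by
        rw [div_le_one ht0]
        exact Real.sqrt_le_iff.2 ⟨ht0.le, by nlinarith⟩
      linarith)
  have := this (left_mem_Icc.2 hjT) (right_mem_Icc.2 hjT) hjT
  simp only at this; linarith

lemma phi_facts {x φ : ℝ} (hx : 0 < x) (hφ : φ ∈ Set.Ioc 0 (Real.pi / 2))
    (hpos : 0 < Real.cos φ - (Real.pi / 2 - φ) * Real.sin φ)
    (heq : Real.sin φ / (Real.cos φ - (Real.pi / 2 - φ) * Real.sin φ) = x / Real.pi) :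
    0 < sin φ ∧ 0 < cos φ ∧ sin φ < 1 ∧ π * sin φ = x * (cos φ - (π/2-φ)*sin φ) ∧ 1 ≤ cos φ * rexp (x/3) := by
  have hp := Real.pi_pos
  have hs : 0 < sin φ := Real.sin_pos_of_pos_of_lt_pi hφ.1 (by linarith [hφ.2])
  have h2 : 0 ≤ (π/2-φ) * sin φ := mul_nonneg (by linarith [hφ.2]) hs.le
  have hc : 0 < cos φ := by linarith
  have hsc := Real.sin_sq_add_cos_sq φ
  have hs1 : sin φ < 1 := by nlinarith
  have he : π * sin φ = x * (cos φ - (π/2-φ)*sin φ) := by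
    rw [div_eq_div_iff hpos.ne' hp.ne'] at heq; linarith
  refine ⟨hs, hc, hs1, he, ?_⟩
  have h3 : π * sin φ ≤ x * cos φ := by rw [he]; nlinarith
  have h4 : 3 * sin φ ≤ x * cos φ := by nlinarith [Real.pi_gt_three]
  have h5 := Real.add_one_le_exp (x/3)
  have h6 : cos φ * (x/3+1) ≤ cos φ * rexp (x/3) := mul_le_mul_of_nonneg_left h5 hc.le
  nlinarith [mul_pos hs hc]

lemma bPh_T {x φ k : ℝ} (hx : 0 < x) (hk : 0 < k) (hφ : φ ∈ Set.Ioc 0 (Real.pi / 2)) (hs : 0 < sin φ) (hc : 0 < cos φ)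
    (he : π * sin φ = x * (cos φ - (π/2-φ)*sin φ)) :
    bPh (x*k) (x / sin φ * k) = k*π := by
  have hp := Real.pi_pos
  unfold bPh
  have e1 : (x / sin φ * k)^2 - (x*k)^2 = (x*k*cos φ/sin φ)^2 := by
    have : cos φ^2 = 1 - sin φ^2 := Real.cos_sq' φ
    rw [div_pow, mul_pow _ (cos φ), this]; field_simp
  have e2 : x*k/(x / sin φ * k) = sin φ := by field_simp
  rw [e1, e2, Real.sqrt_sq (by positivity), ← Real.cos_pi_div_two_sub,
    Real.arccos_cos (by linarith [hφ.2]) (by linarith [hφ.1]), Real.cos_pi_div_two_sub]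
  field_simp
  linarith

set_option maxHeartbeats 1000000 in
theorem stmt_10 (x : ℝ) (hx : 0 < x) (φ : ℝ) (hφ : φ ∈ Set.Ioc 0 (Real.pi / 2))
    (hpos : 0 < Real.cos φ - (Real.pi / 2 - φ) * Real.sin φ)
    (heq : Real.sin φ / (Real.cos φ - (Real.pi / 2 - φ) * Real.sin φ) = x / Real.pi)
    (ι : ℝ) (hι : ι = x / Real.sin φ) :
    ∀ ε : ℝ, 0 < ε → ∃ k₀ : ℕ, ∀ k : ℕ, k₀ ≤ k → ∀ j : ℝ,
      IsKthBesselZero (x * k) k j →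
        -Real.exp ((1 / 3 + ε) * x) * Real.pi / (4 * k) ≤ j / k - ι ∧
        j / k - ι ≤ -(1 - ε) * Real.pi / (4 * k) := by
  intro ε hε
  have hp := Real.pi_pos
  obtain ⟨hs, hc, hs1, he, hce⟩ := phi_facts hx hφ hpos heq
  have hι0 : x < ι := by rw [hι, lt_div_iff₀ hs]; nlinarith
  set D := 2*π*(1+5*x^2/4)^2 with hD
  have hD0 : 0 < D := by positivity
  set q := 1/√(1+x^2/4) with hq
  have hq0 : 0 < q := by positivity
  set R := π/(4*q) with hR
  have hR0 : 0 < R := by positivity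
  set E := rexp ((1/3+ε)*x) with hE
  have hE0 : 0 < E := Real.exp_pos _
  -- continuity
  have hcE : 1/E < √(1-x^2/ι^2) := by
    have e1 : 1-x^2/ι^2 = cos φ^2 := by
      rw [hι, Real.cos_sq']; field_simp
    rw [e1, Real.sqrt_sq hc.le, div_lt_iff₀ hE0]
    have : rexp (x/3) < E := Real.exp_lt_exp.2 (by nlinarith)
    nlinarith
  have hcont : ContinuousAt (fun y : ℝ => √(1-x^2/y^2)) ι := by
    refine ContinuousAt.sqrt (ContinuousAt.sub continuousAt_const
      (ContinuousAt.div continuousAt_const (by fun_prop) ?_))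
    have : 0 < ι := by linarith
    positivity
  obtain ⟨δ, hδ, hball⟩ := Metric.eventually_nhds_iff.1 (hcont.eventually (lt_mem_nhds hcE))
  set ε' := min ε (1/2) with hε'
  have hε'0 : 0 < ε' := by positivity
  obtain ⟨k₀, hk₀⟩ := exists_nat_gt (1 + 1/(2*x) + R/δ + D/(ε'*(π/4)))
  refine ⟨k₀, fun k hk j hj => ?_⟩
  have hkk : 1 + 1/(2*x) + R/δ + D/(ε'*(π/4)) < k := hk₀.trans_le (by exact_mod_cast hk)
  have p1 : 0 < 1/(2*x) := by positivity
  have p2 : 0 < R/δ := by positivity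
  have p3 : 0 < D/(ε'*(π/4)) := by positivity
  have hk1 : (1:ℝ) < k := by linarith
  have hk0 : (0:ℝ) < k := by linarith
  have hxk : 1/2 < x*k := by
    have : 1/(2*x) < k := by linarith
    rw [div_lt_iff₀ (by positivity)] at this; linarith
  have hRk : R/k < δ := by
    have : R/δ < k := by linarith
    rw [div_lt_iff₀ hδ] at this
    rw [div_lt_iff₀ hk0]; linarith
  have hDk : D/k < ε'*(π/4) := by
    have : D/(ε'*(π/4)) < k := by linarith
    rw [div_lt_iff₀ (by positivity)] at this
    rw [div_lt_iff₀ hk0]; linarith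
  obtain ⟨n, rfl⟩ : ∃ n, k = n+1 := ⟨k-1, by
    have : 1 < k := by exact_mod_cast hk1
    omega⟩
  obtain ⟨a, ha⟩ := exists_Z hxk.le
  have hja := kth_eq ha hj
  simp only [Nat.add_sub_cancel] at hja
  have hjν := zero_gt hxk.le (ha.pos n) (ha.zero n)
  have l1 := ph_lo hxk ha n
  have l2 := S_lo hxk ha n
  have l3 : bPh (x*((n+1:ℕ):ℝ)) (a n) ≤ ((n:ℝ)+1)*π - π/4 + D/(n+1) := by
    have ha' : IsZ (x*((n:ℝ)+1)) a := by simpa using ha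
    have := ph_hi hx (by simpa using hxk) ha'
    simpa using this
  have hT := bPh_T hx hk0 hφ hs hc he
  rw [← hι] at hT
  rw [← hja] at l1 l2 l3 hjν
  have hcast : ((n+1:ℕ):ℝ) = (n:ℝ)+1 := by push_cast; ring
  rw [← hcast] at l1 l2 l3
  clear hj hja ha hkk hk hk₀
  generalize ((n+1:ℕ):ℝ) = κ at *
  have hε'2 : ε' ≤ 1/2 := min_le_right _ _
  have hε'1 : ε' ≤ ε := min_le_left _ _
  have hTν : x*κ < ι*κ := by nlinarith
  have hjT : j < ι*κ := by
    have : bPh (x*κ) j < bPh (x*κ) (ι*κ) := by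
      have u : ε'*(π/4) ≤ 1/2*(π/4) := by gcongr
      rw [hT]; linarith
    exact ((bPh_smono (by positivity : 0 < x*κ)).lt_iff_lt hjν hTν).1 this
  have hν0 : 0 < x*κ := by positivity
  have hj0 : 0 < j := by linarith
  constructor
  · have c1 := ph_slope (c := q) hν0 hjν hjT.le (fun t ht => by
      have ht0 : 0 < t := by linarith [ht.1]
      have hS : 4*κ^2 ≤ t^2-(x*κ)^2 := by
        have := pow_le_pow_left₀ hj0.le ht.1 2
        linarith
      have hS0 : 0 ≤ t^2-(x*κ)^2 := le_trans (by positivity) hS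
      rw [hq, div_le_div_iff₀ (by positivity) ht0, one_mul, ← Real.sqrt_mul hS0]
      apply Real.le_sqrt_of_sq_le
      have := mul_le_mul_of_nonneg_left hS (sq_nonneg x)
      linarith [mul_pow x κ 2])
    have c2 : ι*κ - j ≤ R := by
      rw [hR, le_div_iff₀ (by positivity)]
      rw [hT] at c1; linarith
    have c3 := ph_slope (c := 1/E) hν0 hjν hjT.le (fun t ht => by
      have ht0 : 0 < t := by linarith [ht.1]
      have hd : dist (t/κ) ι < δ := by
        rw [Real.dist_eq, abs_lt]
        have u1 : t/κ ≤ ι := by rw [div_le_iff₀ hk0]; exact ht.2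
        have u2 : ι - R/κ ≤ t/κ := by
          rw [le_div_iff₀ hk0, sub_mul, div_mul_cancel₀ _ hk0.ne']; linarith [ht.1]
        constructor <;> linarith
      have := hball hd
      have e : √(t^2-(x*κ)^2)/t = √(1-x^2/(t/κ)^2) := by
        have e2 : 1-x^2/(t/κ)^2 = (t^2-(x*κ)^2)/t^2 := by field_simp
        rw [e2, Real.sqrt_div' _ (by positivity), Real.sqrt_sq ht0.le]
      rw [e]; exact this.le)
    have c4 : ι*κ - j ≤ E*(π/4) := by
      rw [hT] at c3
      have : 1/E*(ι*κ-j) ≤ π/4 := by linarith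
      rw [one_div, inv_mul_le_iff₀ hE0] at this; exact this
    have e1 : j/κ - ι = -(ι*κ-j)/κ := by field_simp; ring
    have e2 : -E*π/(4*κ) = -(E*(π/4))/κ := by field_simp
    rw [e1, e2]
    gcongr
  · have c1 := ph_slope1 hν0 hjν hjT.le
    rw [hT] at c1
    have c2 : (1-ε)*(π/4) ≤ ι*κ - j := by
      have u : ε'*(π/4) ≤ ε*(π/4) := by gcongr
      linarith
    have e1 : j/κ - ι = -(ι*κ-j)/κ := by field_simp; ring
    have e2 : -(1-ε)*π/(4*κ) = -((1-ε)*(π/4))/κ := by field_simp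
    rw [e1, e2]
    gcongr
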